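/- Let k ≥ 2, let G be a graph, and let H be a non-empty face of NM_k(G) (i.e., a non-empty edge set with ν(H) < k). Then the link of H in NM_k(G) has vanishing reduced homology in all dimensions d ≥ 3k - 4. If moreover G is bipartite, the link has vanishing reduced homology in all dimensions d ≥ 2k - 3. -/

import Mathlib

/-!
Adding `H` to its faces turns the link of `H` into the family of edge sets that contain `H` and have
matching number less than `k`, with degrees shifted by `|H|`. Filtered by the matching number, this
family has as quotients the convex families of edge sets that contain `H` and have matching number
exactly `m`, whose homology is that of a simplicial complex relative to a subcomplex. For a single
prescribed edge their homology vanishes above degree `3m`, and above degree `2m` for a bipartite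
graph, where the degree of an edge set is its cardinality. Every further prescribed edge costs one
degree by a long exact sequence, which the shift by `|H|` absorbs.

The bound `3m` comes from splitting a family further along the Gallai–Edmonds decomposition of an
edge set, made monotone so that its values filter the family. Let `D` be the set of vertices missed
by some maximum matching and `A` the set of neighbours of `D`. Prescribing the decomposition turns
the family into a product: the edges inside each component of `D` form a factor-critical graph,
those outside `A ∪ D` have a perfect matching, the edges from `A` to vertices outside `D` are
arbitrary, and the edges from `A` to `D` form, once components are contracted, a bipartite graph
that matches `A` with surplus. Each factor is bounded by induction on `m`, in tandem with the
factor-critical families, which arise from all edge sets with a matching of size `m` by removing the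
other decompositions. The bipartite bound `2m` follows the same pattern with the Dulmage–Mendelsohn
decomposition and the families with surplus.
-/

attribute [local instance] Classical.propDecidable

variable {W : Type} [LinearOrder W] (F : Type) [Field F]

/-- The simplicial boundary operator on formal `F`-linear combinations of finite sets
(faces `s` of cardinality `n` being generators in degree `n`; the empty face is the
generator of the augmentation degree, so this computes *reduced* homology). -/
noncomputable def bdry (x : Finset W →₀ F) : Finset W →₀ F :=
  x.sum fun s a =>
    ∑ v ∈ s, (a * (-1 : F) ^ (s.filter fun w => w < v).card) • Finsupp.single (s.erase v) (1 : F)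

/-- The reduced homology (with coefficients in `F`) of the complex `K` vanishes in
dimension `d`: every reduced `d`-cycle of `K` is a boundary of a `(d+1)`-chain of `K`.
(A face of dimension `d` has cardinality `d + 1`.) -/
def VanishesAt (K : Finset (Finset W)) (d : ℕ) : Prop :=
  ∀ x : Finset W →₀ F, (∀ s ∈ x.support, s ∈ K ∧ s.card = d + 1) → bdry F x = 0 →
    ∃ y : Finset W →₀ F, (∀ s ∈ y.support, s ∈ K ∧ s.card = d + 2) ∧ bdry F y = x

/-- The link of a face `σ` in the complex `K`. -/
noncomputable def linkOf (K : Finset (Finset W)) (σ : Finset W) : Finset (Finset W) :=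
  K.filter fun τ => Disjoint τ σ ∧ τ ∪ σ ∈ K

/-- A matching: a finite set of non-loop edges that are pairwise vertex-disjoint. -/
def IsMatching {V : Type} (M : Finset (Sym2 V)) : Prop :=
  (∀ e ∈ M, ¬ e.IsDiag) ∧ ∀ e ∈ M, ∀ f ∈ M, e ≠ f → ∀ v, v ∈ e → v ∉ f

/-- The matching number of a finite edge set. -/
noncomputable def nu {V : Type} (E : Finset (Sym2 V)) : ℕ :=
  (E.powerset.filter fun M => IsMatching M).sup Finset.card

/-- The non-matching complex `NM_k(G)` of the graph with edge set `E`: the family of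
edge subsets whose matching number is `< k`. -/
noncomputable def NM {V : Type} (k : ℕ) (E : Finset (Sym2 V)) : Finset (Finset (Sym2 V)) :=
  E.powerset.filter fun σ => nu σ < k

/-! ## A calculus of convex families of finite sets -/

/-- Derivable bounds on the top degree in which a convex family `U` of subsets of `G` has relative
homology, degrees being cardinalities. An upper set `P` splits `U` into the subcomplex `U \ P` and
the quotient `U ∩ P`; `union` and `quot` come from the long exact sequence of this pair, and `free`
is a cone. The ground set `G` is recorded because products need disjoint grounds. -/
inductive AcyclicAbove {ι : Type*} (G : Finset ι) : Set (Finset ι) → ℕ → Prop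
  | empty (t : ℕ) : AcyclicAbove G ∅ t
  | single {s : Finset ι} {t : ℕ} : s ⊆ G → s.card ≤ t → AcyclicAbove G {s} t
  | free {U : Set (Finset ι)} {e : ι} (t : ℕ) : U.OrdConnected → (∀ s ∈ U, s ⊆ G) → e ∈ G →
      (∀ s, e ∉ s → (s ∈ U ↔ insert e s ∈ U)) → AcyclicAbove G U t
  | union {U P : Set (Finset ι)} {t : ℕ} : U.OrdConnected → IsUpperSet P →
      AcyclicAbove G (U \ P) t → AcyclicAbove G (U ∩ P) t → AcyclicAbove G U t
  | quot {U P : Set (Finset ι)} {t : ℕ} : U.OrdConnected → IsUpperSet P →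
      AcyclicAbove G U (t + 1) → AcyclicAbove G (U \ P) t → AcyclicAbove G (U ∩ P) (t + 1)

namespace AcyclicAbove

variable {ι : Type*} {G G' : Finset ι} {U : Set (Finset ι)} {t t' : ℕ}

theorem ordConnected (h : AcyclicAbove G U t) : U.OrdConnected := by
  induction h with
  | empty => exact Set.ordConnected_empty
  | single => exact Set.ordConnected_singleton
  | free _ hU => exact hU
  | union hU => exact hU
  | quot hU hP => exact hU.inter hP.ordConnected

theorem mono (h : AcyclicAbove G U t) (ht : t ≤ t') : AcyclicAbove G U t' := by
  induction h generalizing t' with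
  | empty => exact .empty _
  | single hs hc => exact .single hs (hc.trans ht)
  | free _ hU hs he hf => exact .free _ hU hs he hf
  | union hU hP _ _ ihL ihQ => exact .union hU hP (ihL ht) (ihQ ht)
  | quot hU hP _ _ ihU ihL =>
    obtain ⟨r, rfl⟩ := Nat.exists_eq_add_one.2 (Nat.succ_pos'.trans_le ht)
    exact .quot hU hP (ihU ht) (ihL (Nat.le_of_succ_le_succ ht))

theorem mono_ground (h : AcyclicAbove G U t) (hG : G ⊆ G') : AcyclicAbove G' U t := by
  induction h with
  | empty => exact .empty _
  | single hs hc => exact .single (hs.trans hG) hc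
  | free _ hU hs he hf => exact .free _ hU (fun s h => (hs s h).trans hG) (hG he) hf
  | union hU hP _ _ ihL ihQ => exact .union hU hP ihL ihQ
  | quot hU hP _ _ ihU ihL => exact .quot hU hP ihU ihL

/-- If `f` is monotone, its values are attained on consecutive quotients of an upward filtration. -/
theorem of_fibers {P : Type*} [PartialOrder P] {f : Finset ι → P} (hf : Monotone f)
    (hU : U.OrdConnected) (hG : ∀ s ∈ U, s ⊆ G) (h : ∀ p, AcyclicAbove G (U ∩ f ⁻¹' {p}) t) :
    AcyclicAbove G U t := by
  have hfin : U.Finite := G.powerset.finite_toSet.subset fun s hs => by simpa using hG s hs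
  induction hn : (f '' U).ncard using Nat.strong_induction_on generalizing U with | _ n ih
  obtain rfl | hne := U.eq_empty_or_nonempty
  · exact .empty t
  obtain ⟨p, ⟨u, hu, rfl⟩, hmax⟩ := (hfin.image f).exists_maximal (hne.image f)
  have hup : IsUpperSet {s | f u ≤ f s} := fun a b hab ha => le_trans ha (hf hab)
  have htop : U ∩ {s | f u ≤ f s} = U ∩ f ⁻¹' {f u} := by
    ext s
    exact and_congr_right fun hs =>
      ⟨fun h => (hmax ⟨s, hs, rfl⟩ h).antisymm h, fun h => ge_of_eq h⟩
  refine .union hU hup ?_ (htop ▸ h (f u))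
  refine ih _ ?_ (hU.inter hup.compl.ordConnected) (fun s hs => hG s hs.1) (fun q => ?_)
    (hfin.subset Set.sdiff_subset) rfl
  · refine hn ▸ Set.ncard_lt_ncard ((Set.image_mono Set.sdiff_subset).ssubset_of_mem_notMem
      ⟨u, hu, rfl⟩ ?_) (hfin.image f)
    rintro ⟨s, hs, hsu⟩
    exact hs.2 hsu.ge
  · by_cases hq : f u ≤ q
    · convert AcyclicAbove.empty t
      rw [Set.eq_empty_iff_forall_notMem]
      rintro s ⟨⟨_, hs⟩, rfl⟩
      exact hs hq
    · convert h q using 1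
      ext s
      refine ⟨fun hs => ⟨hs.1.1, hs.2⟩, fun hs => ⟨⟨hs.1, fun hus => hq ?_⟩, hs.2⟩⟩
      rwa [← show f s = q from hs.2]

theorem Icc (E H : Finset ι) : AcyclicAbove E (Set.Icc H E) H.card := by
  by_cases hEH : E ⊆ H
  · by_cases hHE : H ⊆ E
    · rw [hEH.antisymm hHE, Set.Icc_self]
      exact .single (Finset.Subset.refl H) le_rfl
    · rw [Set.Icc_eq_empty hHE]
      exact .empty _
  · obtain ⟨e, he, heH⟩ := Finset.not_subset.1 hEH
    refine .free _ Set.ordConnected_Icc (fun s hs => hs.2) he fun s _ => ?_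
    simp only [Set.mem_Icc, Finset.insert_subset_iff,
      Finset.subset_insert_iff_of_notMem heH]
    tauto

theorem Icc_union {E H₀ : Finset ι} (R : Finset ι)
    (h : ∀ E' ⊆ E, AcyclicAbove E' (Set.Icc H₀ E' ∩ U) t) :
    AcyclicAbove E (Set.Icc (H₀ ∪ R) E ∩ U) (t + R.card) := by
  induction R using Finset.induction_on generalizing E with
  | empty => simpa using h E subset_rfl
  | insert e R he ih =>
    have hupper : IsUpperSet {s : Finset ι | e ∈ s} := fun _ _ hs h => hs h
    have herase := (ih fun E' hE' => h E' (hE'.trans (Finset.erase_subset e E))).mono_ground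
      (Finset.erase_subset e E)
    have hE := (ih h).mono (Nat.le_succ _)
    rw [Finset.card_insert_of_notMem he, ← add_assoc]
    convert AcyclicAbove.quot hE.ordConnected hupper hE ?_ using 1
    · ext s
      simp only [Finset.union_insert, Set.mem_inter_iff, Set.mem_Icc, Finset.insert_subset_iff,
        Set.mem_ofPred_eq]
      tauto
    · convert herase using 1
      ext s
      simp only [Set.mem_sdiff, Set.mem_inter_iff, Set.mem_Icc, Finset.subset_erase,
        Set.mem_ofPred_eq]
      tauto

theorem inter_preimage {G₁ : Finset ι} {V : Set (Finset ι)} {a : ℕ} (h : AcyclicAbove G₁ U t)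
    (hG : G₁ ⊆ G) (hV : V.OrdConnected) (hVG : ∀ s ∈ V, s ⊆ G)
    (hfree : ∀ e ∈ G₁, ∀ s, e ∉ s → (s ∈ V ↔ insert e s ∈ V))
    (hsingle : ∀ s₁ ⊆ G₁, AcyclicAbove G (V ∩ (· ∩ G₁) ⁻¹' {s₁}) (s₁.card + a)) :
    AcyclicAbove G (V ∩ (· ∩ G₁) ⁻¹' U) (t + a) := by
  have hmono : Monotone fun s : Finset ι => s ∩ G₁ := fun _ _ h => Finset.inter_subset_inter_right h
  have hconn {U : Set (Finset ι)} (hU : U.OrdConnected) : (V ∩ (· ∩ G₁) ⁻¹' U).OrdConnected :=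
    hV.inter (hU.preimage_mono hmono)
  induction h with
  | empty =>
    rw [Set.preimage_empty, Set.inter_empty]
    exact .empty _
  | @single s _ hs hc => exact (hsingle s hs).mono (by omega)
  | @free U e _ hU _ he hf =>
    refine .free _ (hconn hU) (fun s hs => hVG s hs.1) (hG he) fun s hs => ?_
    have hs₁ := hf (s ∩ G₁) (by simp [hs])
    rw [← Finset.insert_inter_of_mem he] at hs₁
    exact and_congr (hfree e he s hs) hs₁
  | union hU hP _ _ ihL ihQ =>
    rw [Set.preimage_sdiff, ← Set.inter_sdiff_assoc] at ihL
    rw [Set.preimage_inter, ← Set.inter_assoc] at ihQ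
    exact .union (hconn hU) (hP.preimage hmono) ihL ihQ
  | quot hU hP _ _ ihU ihL =>
    rw [Set.preimage_inter, ← Set.inter_assoc, add_right_comm]
    rw [Set.preimage_sdiff, ← Set.inter_sdiff_assoc] at ihL
    exact .quot (hconn hU) (hP.preimage hmono) (by rwa [add_right_comm] at ihU) ihL

theorem of_subset_singleton_empty {G : Finset ι} {U : Set (Finset ι)} (hU : U ⊆ {∅}) (t : ℕ) :
    AcyclicAbove G U t := by
  rcases Set.subset_singleton_iff_eq.1 hU with rfl | rfl
  · exact .empty t
  · exact .single (Finset.empty_subset G) (by simp)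

theorem Iic_inter_preimage_singleton_inter_preimage_singleton {G₁ G₂ s₁ s₂ : Finset ι}
    (hd : Disjoint G₁ G₂) (hs₁ : s₁ ⊆ G₁) (hs₂ : s₂ ⊆ G₂) :
    Set.Iic (G₁ ∪ G₂) ∩ (· ∩ G₁) ⁻¹' {s₁} ∩ (· ∩ G₂) ⁻¹' {s₂} = {s₁ ∪ s₂} := by
  ext s
  constructor
  · rintro ⟨⟨hs, rfl⟩, rfl⟩
    rw [Set.mem_singleton_iff, ← Finset.inter_union_distrib_left]
    exact (Finset.inter_eq_left.2 hs).symm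
  · rintro rfl
    have h₁₂ := Finset.disjoint_iff_inter_eq_empty.1 (hd.mono_left hs₁)
    have h₂₁ := Finset.disjoint_iff_inter_eq_empty.1 (hd.symm.mono_left hs₂)
    exact ⟨⟨Finset.union_subset_union hs₁ hs₂,
      by simp [Finset.union_inter_distrib_right, h₂₁, hs₁]⟩,
      by simp [Finset.union_inter_distrib_right, h₁₂, hs₂]⟩

theorem prod {G₁ G₂ : Finset ι} {U₁ U₂ : Set (Finset ι)} {t₁ t₂ : ℕ} (hd : Disjoint G₁ G₂)
    (h₁ : AcyclicAbove G₁ U₁ t₁) (h₂ : AcyclicAbove G₂ U₂ t₂) :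
    AcyclicAbove (G₁ ∪ G₂) {s | s ⊆ G₁ ∪ G₂ ∧ s ∩ G₁ ∈ U₁ ∧ s ∩ G₂ ∈ U₂} (t₁ + t₂) := by
  have hconn (V : Set (Finset ι)) (hV : V.OrdConnected) (K : Finset ι) :
      (Set.Iic (G₁ ∪ G₂) ∩ (· ∩ K) ⁻¹' V).OrdConnected :=
    Set.ordConnected_Iic.inter
      (hV.preimage_mono fun _ _ h => Finset.inter_subset_inter_right h)
  have toggle (V : Set (Finset ι)) {K K' : Finset ι} (hK : Disjoint K K') (hKG : K ⊆ G₁ ∪ G₂)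
      (e : ι) (he : e ∈ K) (s : Finset ι) : s ∈ Set.Iic (G₁ ∪ G₂) ∩ (· ∩ K') ⁻¹' V ↔
        insert e s ∈ Set.Iic (G₁ ∪ G₂) ∩ (· ∩ K') ⁻¹' V := by
    have he' : e ∉ K' := Finset.disjoint_left.1 hK he
    simp [Finset.insert_inter_of_notMem he', Finset.insert_subset_iff, hKG he]
  have hsub₁ : G₁ ⊆ G₁ ∪ G₂ := Finset.subset_union_left
  have hsub₂ : G₂ ⊆ G₁ ∪ G₂ := Finset.subset_union_right
  have key := h₁.inter_preimage (a := t₂) hsub₁ (hconn U₂ h₂.ordConnected G₂) (fun s hs => hs.1)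
    (fun e he s _ => toggle U₂ hd hsub₁ e he s) fun s₁ hs₁ => ?_
  · convert key using 1
    ext s
    simp [and_assoc, and_comm]
  have key := h₂.inter_preimage (a := s₁.card) hsub₂ (hconn {s₁} Set.ordConnected_singleton G₁)
    (fun s hs => hs.1) (fun e he s _ => toggle {s₁} hd.symm hsub₂ e he s) fun s₂ hs₂ => ?_
  · rw [Set.inter_right_comm, add_comm]
    exact key
  rw [Iic_inter_preimage_singleton_inter_preimage_singleton hd hs₁ hs₂]
  exact .single (Finset.union_subset_union hs₁ hs₂) ((Finset.card_union_le _ _).trans (by omega))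

theorem prod_filter {E H : Finset ι} {p : ι → Prop} {U₁ U₂ : Set (Finset ι)} {t₁ t₂ : ℕ}
    (h₁ : AcyclicAbove (E.filter p) (Set.Icc (H.filter p) (E.filter p) ∩ U₁) t₁)
    (h₂ : AcyclicAbove (E.filter (¬ p ·))
      (Set.Icc (H.filter (¬ p ·)) (E.filter (¬ p ·)) ∩ U₂) t₂) :
    AcyclicAbove E (Set.Icc H E ∩ {s | s.filter p ∈ U₁ ∧ s.filter (¬ p ·) ∈ U₂}) (t₁ + t₂) := by
  have hprod := h₁.prod (Finset.disjoint_filter_filter_not E E p) h₂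
  rw [Finset.filter_union_filter_not_eq] at hprod
  convert hprod using 1
  ext s
  have hcap (hs : s ⊆ E) (q : ι → Prop) [DecidablePred q] : s ∩ E.filter q = s.filter q := by
    rw [Finset.inter_filter, Finset.inter_eq_left.2 hs]
  constructor
  · rintro ⟨⟨hH, hs⟩, hU₁, hU₂⟩
    refine ⟨hs, ?_⟩
    rw [hcap hs, hcap hs]
    exact ⟨⟨⟨Finset.filter_subset_filter _ hH, Finset.filter_subset_filter _ hs⟩, hU₁⟩,
      ⟨Finset.filter_subset_filter _ hH, Finset.filter_subset_filter _ hs⟩, hU₂⟩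
  · rintro ⟨hs, hs'⟩
    rw [hcap hs, hcap hs] at hs'
    obtain ⟨⟨⟨hH₁, -⟩, hU₁⟩, ⟨hH₂, -⟩, hU₂⟩ := hs'
    refine ⟨⟨?_, hs⟩, hU₁, hU₂⟩
    have hH := Finset.union_subset_union hH₁ hH₂
    rwa [Finset.filter_union_filter_not_eq, Finset.filter_union_filter_not_eq] at hH

theorem pi {κ : Type*} (p : ι → κ) (I : Finset κ) {E H : Finset ι} (hE : ∀ e ∈ E, p e ∈ I)
    {U : κ → Set (Finset ι)} {t : κ → ℕ}
    (h : ∀ i ∈ I, AcyclicAbove (E.filter (p · = i))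
      (Set.Icc (H.filter (p · = i)) (E.filter (p · = i)) ∩ U i) (t i)) :
    AcyclicAbove E (Set.Icc H E ∩ {s | ∀ i ∈ I, s.filter (p · = i) ∈ U i}) (∑ i ∈ I, t i) := by
  induction I using Finset.induction_on generalizing E H with
  | empty =>
    obtain rfl : E = ∅ := Finset.eq_empty_of_forall_notMem fun e he => by simpa using hE e he
    exact .of_subset_singleton_empty (fun s hs => Finset.subset_empty.1 hs.1.2) _
  | insert a I ha ih =>
    have hrest (s : Finset ι) (i : κ) (hi : i ∈ I) :
        (s.filter (¬ p · = a)).filter (p · = i) = s.filter (p · = i) := by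
      rw [Finset.filter_filter]
      exact Finset.filter_congr fun e _ => ⟨And.right, fun h => ⟨fun h' => ha (h' ▸ h ▸ hi), h⟩⟩
    have hI := ih (E := E.filter (¬ p · = a)) (H := H.filter (¬ p · = a))
      (fun e he => (Finset.mem_insert.1 (hE e (Finset.mem_filter.1 he).1)).resolve_left
        (Finset.mem_filter.1 he).2)
      (fun i hi => by simpa only [hrest _ i hi] using h i (Finset.mem_insert_of_mem hi))
    rw [Finset.sum_insert ha]
    convert (h a (Finset.mem_insert_self a I)).prod_filter hI using 2
    ext s
    rw [Set.mem_ofPred_eq, Finset.forall_mem_insert]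
    exact and_congr_right fun _ => forall₂_congr fun i hi => by rw [hrest s i hi]

end AcyclicAbove

/-! ## Soundness of the calculus -/

/-- `c r e` plays the role of the incidence number `[insert e r : r]` for `e ∉ r`; `anti` says that
the boundary squares to zero. -/
structure IsIncidence {ι K : Type*} [Field K] (c : Finset ι → ι → K) : Prop where
  ne_zero : ∀ r e, c r e ≠ 0
  anti : ∀ r e f, e ∉ r → f ∉ r → e ≠ f →
    c r e * c (insert e r) f = -(c r f * c (insert f r) e)

section Soundness

variable {ι K : Type*} [Field K] {c : Finset ι → ι → K} {G : Finset ι} {U P : Set (Finset ι)}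
  {n t : ℕ} {x y : Finset ι → K} {r : Finset ι}

/-- The boundary operator with incidence numbers `c` on chains of subsets of `G`, a chain being
given by its coefficient function. -/
noncomputable def boundary (c : Finset ι → ι → K) (G : Finset ι) :
    (Finset ι → K) →ₗ[K] Finset ι → K where
  toFun x r := ∑ e ∈ G \ r, c r e * x (insert e r)
  map_add' x y := by ext r; simp [mul_add, Finset.sum_add_distrib]
  map_smul' a x := by ext r; simp [Finset.mul_sum, mul_left_comm]

theorem boundary_apply (c : Finset ι → ι → K) (G : Finset ι) (x : Finset ι → K) (r : Finset ι) :
    boundary c G x r = ∑ e ∈ G \ r, c r e * x (insert e r) := rfl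

theorem boundary_congr (h : ∀ e ∉ r, x (insert e r) = y (insert e r)) :
    boundary c G x r = boundary c G y r :=
  Finset.sum_congr rfl fun e he => by rw [h e (Finset.mem_sdiff.1 he).2]

theorem exists_insert_ne_zero (h : boundary c G x r ≠ 0) : ∃ e ∉ r, x (insert e r) ≠ 0 := by
  by_contra! hx
  exact h ((boundary_congr (y := 0) hx).trans (congrFun (map_zero _) r))

theorem boundary_boundary (hc : IsIncidence c) : boundary c G (boundary c G x) r = 0 := by
  simp_rw [boundary_apply, Finset.mul_sum]
  rw [Finset.sum_sigma']
  refine Finset.sum_involution (fun p _ => ⟨p.2, p.1⟩) ?_ ?_ ?_ (fun _ _ => rfl)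
  all_goals
    rintro ⟨e, f⟩ h
    simp only [Finset.mem_sigma, Finset.mem_sdiff, Finset.mem_insert, not_or] at h
    obtain ⟨⟨heG, her⟩, hfG, hfe, hfr⟩ := h
  · have hanti := hc.anti r e f her hfr (Ne.symm hfe)
    rw [← mul_assoc, ← mul_assoc, hanti, Finset.insert_comm e f r]
    ring
  · exact fun _ h => hfe (Sigma.mk.inj_iff.1 h).1
  · simp [heG, her, hfG, hfr, Ne.symm hfe]

/-- Chains of `n`-element members of the family `U`. -/
def chains (K : Type*) [Field K] (U : Set (Finset ι)) (n : ℕ) : Submodule K (Finset ι → K) where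
  carrier := {x | ∀ s, x s ≠ 0 → s ∈ U ∧ s.card = n}
  add_mem' {x y} hx hy s hs := by
    by_cases h : x s = 0
    · exact hy s fun h' => hs (by simp [h, h'])
    · exact hx s h
  zero_mem' s hs := absurd rfl hs
  smul_mem' a x hx s hs := hx s (right_ne_zero_of_mul hs)

theorem chains_mono {V : Set (Finset ι)} (h : U ⊆ V) : chains K U n ≤ chains K V n :=
  fun _ hx s hs => ⟨h (hx s hs).1, (hx s hs).2⟩

theorem indicator_mem_chains (h : ∀ s ∈ U, x s ≠ 0 → s.card = n) :
    U.indicator x ∈ chains K U n := fun s hs =>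
  have hsU := Set.mem_of_indicator_ne_zero hs
  ⟨hsU, h s hsU (by rwa [Set.indicator_of_mem hsU] at hs)⟩

theorem card_of_boundary_ne_zero (hx : x ∈ chains K U (n + 1)) (h : boundary c G x r ≠ 0) :
    r.card = n := by
  obtain ⟨e, he, hxe⟩ := exists_insert_ne_zero h
  simpa [he] using (hx _ hxe).2

theorem boundary_indicator_boundary (hc : IsIncidence c) (hU : U.OrdConnected)
    (hx : x ∈ chains K U n) (hr : r ∈ U) :
    boundary c G (U.indicator (boundary c G x)) r = 0 := by
  rw [← boundary_boundary (x := x) hc]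
  refine boundary_congr fun e _ => ?_
  by_contra hne
  obtain ⟨heU, hxe⟩ : insert e r ∉ U ∧ boundary c G x (insert e r) ≠ 0 := by
    by_cases heU : insert e r ∈ U <;> simp_all [eq_comm]
  obtain ⟨f, _, hf⟩ := exists_insert_ne_zero hxe
  exact heU (hU.out hr (hx _ hf).1 ⟨Finset.subset_insert _ _, Finset.subset_insert _ _⟩)

theorem boundary_indicator_inter (hP : IsUpperSet P) (hx : x ∈ chains K U n) (hr : r ∈ P) :
    boundary c G ((U ∩ P).indicator x) r = boundary c G x r := by
  refine boundary_congr fun e _ => ?_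
  by_cases hxe : x (insert e r) = 0
  · rw [hxe, Set.indicator_apply_eq_zero]
    exact fun _ => hxe
  · exact Set.indicator_of_mem (Set.mem_inter (hx _ hxe).1 (hP (Finset.subset_insert e r) hr)) x

theorem boundary_eq_zero_of_mem_upper (hP : IsUpperSet P) (hx : x ∈ chains K (U \ P) n)
    (hr : r ∈ P) : boundary c G x r = 0 := by
  by_contra h
  obtain ⟨e, _, he⟩ := exists_insert_ne_zero h
  exact (hx _ he).1.2 (hP (Finset.subset_insert e r) hr)

/-- The contracting homotopy coning off a chain with apex `e`. -/
noncomputable def cone (c : Finset ι → ι → K) (e : ι) (x : Finset ι → K) (s : Finset ι) : K :=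
  if e ∈ s then (c (s.erase e) e)⁻¹ * x (s.erase e) else 0

theorem boundary_cone_of_notMem (hc : IsIncidence c) {e : ι} (he : e ∈ G) (her : e ∉ r) :
    boundary c G (cone c e x) r = x r := by
  rw [boundary_apply, Finset.sum_eq_single e]
  · simp [cone, her, hc.ne_zero r e]
  · intro f _ hfe
    simp [cone, her, hfe.symm]
  · simp [he, her]

theorem boundary_cone_insert (hc : IsIncidence c) {e : ι} (he : e ∈ G) (her : e ∉ r) :
    boundary c G (cone c e x) (insert e r) = x (insert e r) - (c r e)⁻¹ * boundary c G x r := by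
  have hne := hc.ne_zero r e
  have hterm : ∀ f ∈ (G \ r).erase e, c (insert e r) f * cone c e x (insert f (insert e r)) =
      -(c r e)⁻¹ * (c r f * x (insert f r)) := by
    intro f hf
    obtain ⟨hfe, _, hfr⟩ : f ≠ e ∧ f ∈ G ∧ f ∉ r := by simpa using hf
    have hanti := hc.anti r e f her hfr hfe.symm
    have hne' := hc.ne_zero (insert f r) e
    rw [Finset.insert_comm, cone, if_pos (Finset.mem_insert_self _ _),
      Finset.erase_insert (by simp [her, hfe.symm])]
    field_simp
    linear_combination x (insert f r) * hanti
  rw [boundary_apply, Finset.sdiff_insert, Finset.sum_congr rfl hterm, ← Finset.mul_sum,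
    boundary_apply, ← Finset.add_sum_erase _ _ (Finset.mem_sdiff.2 ⟨he, her⟩)]
  field_simp
  ring

/-- Vanishing in cardinality `n` of the homology of `U`, regarded as the difference of two
simplicial complexes: the boundary is only evaluated on members of `U`. -/
def HomologyVanishes (c : Finset ι → ι → K) (G : Finset ι) (U : Set (Finset ι)) (n : ℕ) : Prop :=
  ∀ x ∈ chains K U n, (∀ r ∈ U, boundary c G x r = 0) →
    ∃ y ∈ chains K U (n + 1), ∀ r ∈ U, boundary c G y r = x r

namespace HomologyVanishes

theorem union (hc : IsIncidence c) (hU : U.OrdConnected) (hP : IsUpperSet P)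
    (hL : HomologyVanishes c G (U \ P) n) (hQ : HomologyVanishes c G (U ∩ P) n) :
    HomologyVanishes c G U n := by
  intro x hx hdx
  obtain ⟨y, hy, hdy⟩ := hQ ((U ∩ P).indicator x)
    (indicator_mem_chains fun s _ hs => (hx s hs).2)
    fun r hr => (boundary_indicator_inter hP hx hr.2).trans (hdx r hr.1)
  have hyU : y ∈ chains K U (n + 1) := chains_mono Set.inter_subset_left hy
  have hdyU : U.indicator (boundary c G y) ∈ chains K U n :=
    indicator_mem_chains fun s _ => card_of_boundary_ne_zero hyU
  have hrest : x - U.indicator (boundary c G y) ∈ chains K (U \ P) n := fun s hs => by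
    have hsU := Submodule.sub_mem _ hx hdyU s hs
    refine ⟨⟨hsU.1, fun hsP => hs ?_⟩, hsU.2⟩
    rw [Pi.sub_apply, Set.indicator_of_mem hsU.1, hdy s ⟨hsU.1, hsP⟩,
      Set.indicator_of_mem (Set.mem_inter hsU.1 hsP), sub_self]
  obtain ⟨z, hz, hdz⟩ := hL _ hrest fun r hr => by
    rw [map_sub, Pi.sub_apply, hdx r hr.1, boundary_indicator_boundary hc hU hyU hr.1, sub_zero]
  refine ⟨y + z, Submodule.add_mem _ hyU (chains_mono Set.sdiff_subset hz), fun r hr => ?_⟩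
  rw [map_add, Pi.add_apply]
  by_cases hrP : r ∈ P
  · rw [boundary_eq_zero_of_mem_upper hP hz hrP, hdy r ⟨hr, hrP⟩, add_zero,
      Set.indicator_of_mem (Set.mem_inter hr hrP)]
  · rw [hdz r ⟨hr, hrP⟩, Pi.sub_apply, Set.indicator_of_mem hr, add_sub_cancel]

theorem quot (hc : IsIncidence c) (hU : U.OrdConnected) (hP : IsUpperSet P)
    (hUn : HomologyVanishes c G U (n + 1)) (hL : HomologyVanishes c G (U \ P) n) :
    HomologyVanishes c G (U ∩ P) (n + 1) := by
  intro x hx hdx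
  have hxU : x ∈ chains K U (n + 1) := chains_mono Set.inter_subset_left hx
  have hdxL : U.indicator (boundary c G x) ∈ chains K (U \ P) n := fun s hs => by
    have hsU := indicator_mem_chains (fun s _ => card_of_boundary_ne_zero hxU) s hs
    refine ⟨⟨hsU.1, fun hsP => hs ?_⟩, hsU.2⟩
    rw [Set.indicator_of_mem hsU.1, hdx s ⟨hsU.1, hsP⟩]
  obtain ⟨v, hv, hdv⟩ := hL _ hdxL fun r hr => boundary_indicator_boundary hc hU hxU hr.1
  obtain ⟨y, hy, hdy⟩ := hUn (x - v)
    (Submodule.sub_mem _ hxU (chains_mono Set.sdiff_subset hv)) fun r hr => by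
      rw [map_sub, Pi.sub_apply]
      by_cases hrP : r ∈ P
      · rw [hdx r ⟨hr, hrP⟩, boundary_eq_zero_of_mem_upper hP hv hrP, sub_zero]
      · rw [hdv r ⟨hr, hrP⟩, Set.indicator_of_mem hr, sub_self]
  refine ⟨(U ∩ P).indicator y, indicator_mem_chains fun s _ hs => (hy s hs).2, fun r hr => ?_⟩
  have hvr : v r = 0 := by
    by_contra h
    exact (hv r h).1.2 hr.2
  rw [boundary_indicator_inter hP hy hr.2, hdy r hr.1, Pi.sub_apply, hvr, sub_zero]

theorem free (hc : IsIncidence c) {e : ι} (he : e ∈ G)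
    (hf : ∀ s, e ∉ s → (s ∈ U ↔ insert e s ∈ U)) : HomologyVanishes c G U n := by
  intro x hx hdx
  refine ⟨cone c e x, fun s hs => ?_, fun r hr => ?_⟩
  · obtain ⟨hes, hxs⟩ := ite_ne_right_iff.1 hs
    obtain ⟨hsU, hcard⟩ := hx _ (right_ne_zero_of_mul hxs)
    rw [hf _ (Finset.notMem_erase e s), Finset.insert_erase hes] at hsU
    exact ⟨hsU, by rw [← hcard, Finset.card_erase_add_one hes]⟩
  by_cases her : e ∈ r
  · have heq := Finset.notMem_erase e r
    rw [← Finset.insert_erase her, boundary_cone_insert hc he heq,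
      hdx _ ((hf _ heq).2 ((Finset.insert_erase her).symm ▸ hr)), mul_zero, sub_zero]
  · exact boundary_cone_of_notMem hc he her

end HomologyVanishes

theorem AcyclicAbove.homologyVanishes (h : AcyclicAbove G U t) (hc : IsIncidence c) (hn : t < n) :
    HomologyVanishes c G U n := by
  induction h generalizing n with
  | empty => exact fun x _ _ => ⟨0, Submodule.zero_mem _, by simp⟩
  | @single s t _ hcard =>
    intro x hx _
    refine ⟨0, Submodule.zero_mem _, fun r hr => ?_⟩
    rw [map_zero, Pi.zero_apply, eq_comm]
    by_contra hxr
    rw [Set.mem_singleton_iff.1 hr] at hxr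
    exact absurd (hx s hxr).2 (by omega)
  | free _ _ _ he hf => exact .free hc he hf
  | union hU hP _ _ ihL ihQ => exact .union hc hU hP (ihL hn) (ihQ hn)
  | quot hU hP _ _ ihU ihL =>
    obtain ⟨m, rfl⟩ := Nat.exists_eq_add_one.2 (Nat.succ_pos'.trans hn)
    exact .quot hc hU hP (ihU hn) (ihL (Nat.lt_of_succ_lt_succ hn))

end Soundness

/-! ## From relative chains to links -/

section Links

/-- The simplicial incidence sign with respect to the order of the vertices induced by `f`. -/
noncomputable def orderSign {ι α : Type*} [LinearOrder α] (K : Type*) [Field K] (f : ι → α)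
    (r : Finset ι) (e : ι) : K :=
  (-1) ^ (r.filter fun w => f w < f e).card

theorem isIncidence_orderSign {ι α : Type*} [LinearOrder α] {K : Type*} [Field K] {f : ι → α}
    (hf : f.Injective) : IsIncidence (orderSign K f) where
  ne_zero r e := pow_ne_zero _ (neg_ne_zero.2 one_ne_zero)
  anti r e g he hg heg := by
    simp only [orderSign, Finset.filter_insert]
    rcases (hf.ne heg).lt_or_gt with h | h
    · rw [if_pos h, if_neg h.not_gt, Finset.card_insert_of_notMem (by simp [he]), pow_succ]
      ring
    · rw [if_pos h, if_neg h.not_gt, Finset.card_insert_of_notMem (by simp [hg]), pow_succ]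
      ring

theorem bdry_apply_eq_sum {x : Finset W →₀ F} {E : Finset W} (hx : ∀ s ∈ x.support, s ⊆ E)
    (r : Finset W) : bdry F x r = ∑ s ∈ E.powerset, ∑ v ∈ E,
      if v ∈ s ∧ s.erase v = r then orderSign F id r v * x s else 0 := by
  have hterm (s : Finset W) (v : W) :
      (x s * (-1) ^ (s.filter (· < v)).card) • Finsupp.single (s.erase v) (1 : F) r =
        if s.erase v = r then orderSign F id r v * x s else 0 := by
    split_ifs with h
    · have hfilter : s.filter (· < v) = r.filter (· < v) := by
        rw [← h, Finset.filter_erase, Finset.erase_eq_of_notMem (by simp)]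
      simp [h, hfilter, orderSign, mul_comm]
    · simp [h]
  rw [bdry, Finsupp.sum, Finsupp.finsetSum_apply]
  refine Finset.sum_subset_zero_on_sdiff (fun s hs => Finset.mem_powerset.2 (hx s hs))
    (fun s hs => Finset.sum_eq_zero fun v _ => ?_) (fun s hs => ?_)
  · simp [Finsupp.notMem_support_iff.1 (Finset.mem_sdiff.1 hs).2]
  · simp_rw [Finsupp.finsetSum_apply, Finsupp.smul_apply, hterm, ite_and]
    rw [Finset.sum_ite_mem, Finset.inter_eq_right.2 (hx s hs)]

theorem bdry_apply {x : Finset W →₀ F} {E : Finset W} (hx : ∀ s ∈ x.support, s ⊆ E)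
    (r : Finset W) : bdry F x r = boundary (orderSign F id) E x r := by
  rw [bdry_apply_eq_sum F hx, Finset.sum_comm, boundary_apply, Finset.sdiff_eq_filter,
    Finset.sum_filter]
  refine Finset.sum_congr rfl fun v _ => ?_
  by_cases hvr : v ∈ r
  · rw [if_neg (not_not.2 hvr)]
    exact Finset.sum_eq_zero fun s _ => if_neg fun ⟨_, h⟩ => Finset.notMem_erase v s (h ▸ hvr)
  · rw [if_pos hvr, Finset.sum_eq_single (insert v r)]
    · simp [hvr]
    · exact fun s _ hs => if_neg fun ⟨hvs, h⟩ => hs (h ▸ (Finset.insert_erase hvs).symm)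
    · intro h
      rw [if_pos ⟨Finset.mem_insert_self v r, Finset.erase_insert hvr⟩,
        Finsupp.notMem_support_iff.1 fun h' => h (Finset.mem_powerset.2 (hx _ h')), mul_zero]

/-- Sort key under which all elements of `H` come last, so that adding `H` to a set disjoint from it
does not change the incidence signs of the other elements. -/
noncomputable def keyLast {ι : Type*} (H : Finset ι) (w : ι) : Bool ×ₗ ι :=
  toLex (decide (w ∈ H), w)

theorem keyLast_injective {ι : Type*} (H : Finset ι) : (keyLast H).Injective :=
  fun _ _ h => congrArg (fun p => (ofLex p).2) h

theorem orderSign_keyLast_union {H τ : Finset W} {e : W} (hτ : Disjoint τ H) (he : e ∉ H) :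
    orderSign F (keyLast H) (τ ∪ H) e = orderSign F id τ e := by
  have hH : H.filter (keyLast H · < keyLast H e) = ∅ := by
    refine Finset.filter_eq_empty_iff.2 fun w hw => ?_
    simp [keyLast, Prod.Lex.toLex_lt_toLex, hw, he]
  have hτe : τ.filter (keyLast H · < keyLast H e) = τ.filter (id · < id e) := by
    refine Finset.filter_congr fun w hw => ?_
    simp [keyLast, Prod.Lex.toLex_lt_toLex, Finset.disjoint_left.1 hτ hw, he]
  rw [orderSign, orderSign, Finset.filter_union, hH, hτe, Finset.union_empty]

theorem boundary_keyLast_union {E H τ : Finset W} {x x' : Finset W → F} (hτ : Disjoint τ H)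
    (hx : ∀ σ, Disjoint σ H → x' (σ ∪ H) = x σ) (hx₀ : ∀ σ, ¬ Disjoint σ H → x σ = 0) :
    boundary (orderSign F (keyLast H)) E x' (τ ∪ H) = boundary (orderSign F id) E x τ := by
  rw [boundary_apply, boundary_apply]
  refine Finset.sum_subset_zero_on_sdiff
    (Finset.sdiff_subset_sdiff subset_rfl Finset.subset_union_left) (fun e he => ?_) fun e he => ?_
  · obtain ⟨⟨heE, heτ⟩, heH⟩ : (e ∈ E ∧ e ∉ τ) ∧ (e ∈ E → e ∉ τ → e ∈ H) := by simpa using he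
    rw [hx₀, mul_zero]
    simp [heH heE heτ]
  · obtain ⟨_, _, heH⟩ : e ∈ E ∧ e ∉ τ ∧ e ∉ H := by simpa using he
    rw [orderSign_keyLast_union F hτ heH, ← Finset.insert_union, hx]
    simp [heH, hτ]

theorem mem_linkOf {ι : Type} {K : Finset (Finset ι)} {H τ : Finset ι} :
    τ ∈ linkOf K H ↔ τ ∈ K ∧ Disjoint τ H ∧ τ ∪ H ∈ K := by
  simp [linkOf]

theorem isLowerSet_linkOf {ι : Type} {K : Finset (Finset ι)}
    (hK : IsLowerSet (K : Set (Finset ι))) (H : Finset ι) :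
    IsLowerSet (linkOf K H : Set (Finset ι)) := by
  intro τ σ hστ hτ
  obtain ⟨hτK, hτH, hτHK⟩ := mem_linkOf.1 hτ
  exact mem_linkOf.2
    ⟨hK hστ hτK, hτH.mono_left hστ, hK (Finset.union_subset_union_left hστ) hτHK⟩

theorem homologyVanishes_linkOf {K : Finset (Finset W)} {E H : Finset W} {n : ℕ}
    (hK : IsLowerSet (K : Set (Finset W)))
    (h : HomologyVanishes (orderSign F (keyLast H)) E (Set.Ici H ∩ K) (n + H.card)) :
    HomologyVanishes (orderSign F id) E (linkOf K H : Set (Finset W)) n := by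
  intro x hx hdx
  have hx₀ (σ : Finset W) (hσ : ¬ Disjoint σ H) : x σ = 0 := by
    by_contra h
    exact hσ (mem_linkOf.1 (hx σ h).1).2.1
  set x' : Finset W → F := fun Γ => if H ⊆ Γ then x (Γ \ H) else 0 with hx'
  have hxx' (σ : Finset W) (hσ : Disjoint σ H) : x' (σ ∪ H) = x σ := by
    simp [hx', Finset.union_sdiff_cancel_right hσ]
  have hx'mem : x' ∈ chains F (Set.Ici H ∩ K) (n + H.card) := fun Γ hΓ => by
    obtain ⟨hHΓ, hxΓ⟩ := ite_ne_right_iff.1 hΓ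
    obtain ⟨hlink, hcard⟩ := hx _ hxΓ
    have hΓK := (mem_linkOf.1 hlink).2.2
    rw [Finset.sdiff_union_of_subset hHΓ] at hΓK
    exact ⟨⟨hHΓ, hΓK⟩, by rw [← Finset.card_sdiff_add_card_eq_card hHΓ, hcard]⟩
  obtain ⟨y', hy', hdy'⟩ := h x' hx'mem fun Γ ⟨hHΓ, hΓK⟩ => by
    have hlink : Γ \ H ∈ linkOf K H := mem_linkOf.2 ⟨hK Finset.sdiff_subset hΓK,
      Finset.sdiff_disjoint, by rwa [Finset.sdiff_union_of_subset hHΓ]⟩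
    rw [← Finset.sdiff_union_of_subset hHΓ,
      boundary_keyLast_union F Finset.sdiff_disjoint hxx' hx₀, hdx _ hlink]
  refine ⟨fun σ => if Disjoint σ H then y' (σ ∪ H) else 0, fun σ hσ => ?_, fun σ hσ => ?_⟩
  · obtain ⟨hσH, hy'σ⟩ := ite_ne_right_iff.1 hσ
    obtain ⟨⟨_, hσK⟩, hcard⟩ := hy' _ hy'σ
    refine ⟨mem_linkOf.2 ⟨hK Finset.subset_union_left hσK, hσH, hσK⟩, ?_⟩
    rw [Finset.card_union_of_disjoint hσH] at hcard
    omega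
  · obtain ⟨_, hσH, hσK⟩ := mem_linkOf.1 hσ
    rw [← boundary_keyLast_union F (x' := y') hσH (fun σ hσ => (if_pos hσ).symm)
      (fun σ hσ => if_neg hσ), hdy' _ ⟨Finset.subset_union_right, hσK⟩, hxx' σ hσH]

theorem vanishesAt_of_homologyVanishes {K : Finset (Finset W)} {E : Finset W} {d : ℕ}
    (hK : IsLowerSet (K : Set (Finset W))) (hE : ∀ s ∈ K, s ⊆ E)
    (h : HomologyVanishes (orderSign F id) E (K : Set (Finset W)) (d + 1)) :
    VanishesAt F K d := by
  intro x hx hdx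
  have hxK (s : Finset W) (hs : x s ≠ 0) := hx s (Finsupp.mem_support_iff.2 hs)
  obtain ⟨y, hy, hdy⟩ := h x hxK fun r _ => by
    rw [← bdry_apply F fun s hs => hE s (hx s hs).1, hdx, Finsupp.zero_apply]
  refine ⟨Finsupp.onFinset K y fun s hs => (hy s hs).1,
    fun s hs => hy s (Finsupp.mem_support_iff.1 hs), Finsupp.ext fun r => ?_⟩
  rw [bdry_apply F fun s hs => hE s (hy s (Finsupp.mem_support_iff.1 hs)).1,
    Finsupp.coe_onFinset]
  by_cases hr : r ∈ K
  · exact hdy r hr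
  · have hxr : x r = 0 := by
      by_contra hne
      exact hr (hxK r hne).1
    rw [hxr]
    by_contra hne
    obtain ⟨e, _, he⟩ := exists_insert_ne_zero hne
    exact hr (hK (Finset.subset_insert e r) (hy _ he).1)

theorem AcyclicAbove.vanishesAt_linkOf {K : Finset (Finset W)} {E H : Finset W} {t d : ℕ}
    (h : AcyclicAbove E (Set.Ici H ∩ K) (t + H.card)) (hK : IsLowerSet (K : Set (Finset W)))
    (hE : ∀ s ∈ K, s ⊆ E) (hd : t ≤ d) : VanishesAt F (linkOf K H) d :=
  vanishesAt_of_homologyVanishes F (isLowerSet_linkOf hK H)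
    (fun s hs => hE s (mem_linkOf.1 hs).1)
    (homologyVanishes_linkOf F hK (h.homologyVanishes (isIncidence_orderSign (keyLast_injective H))
      (by omega)))

end Links

/-! ## Matchings in multigraphs -/

section Matching

variable {ι X : Type*} {ends : ι → Sym2 X} {Γ Γ' M M' : Finset ι} {n : ℕ} {S T : Set X}

/-- The edges of `M` are pairwise vertex-disjoint. An edge `e : ι` of a multigraph has end points
`ends e`; parallel edges are needed because contracting vertex sets creates them. -/
def VertexDisjoint (ends : ι → Sym2 X) (M : Finset ι) : Prop :=
  ∀ ⦃e⦄, e ∈ M → ∀ ⦃f⦄, f ∈ M → ∀ ⦃v⦄, v ∈ ends e → v ∈ ends f → e = f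

/-- The edge set `Γ` contains a matching of size `n` that avoids the vertex set `T`. -/
def HasMatching (ends : ι → Sym2 X) (Γ : Finset ι) (n : ℕ) (T : Set X) : Prop :=
  ∃ M ⊆ Γ, VertexDisjoint ends M ∧ M.card = n ∧ ∀ e ∈ M, ∀ v ∈ ends e, v ∉ T

/-- The edge `e` has an end point in `S`. -/
def Touches (ends : ι → Sym2 X) (S : Set X) (e : ι) : Prop := ∃ v ∈ S, v ∈ ends e

theorem touches_iff_of_eq_mk {e : ι} {x y : X} (h : ends e = s(x, y)) :
    Touches ends S e ↔ x ∈ S ∨ y ∈ S := by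
  simp only [Touches, h, Sym2.mem_iff]
  grind

theorem VertexDisjoint.subset (h : VertexDisjoint ends M) (hM : M' ⊆ M) :
    VertexDisjoint ends M' :=
  fun _ he _ hf => h (hM he) (hM hf)

theorem VertexDisjoint.union (h : VertexDisjoint ends M) (h' : VertexDisjoint ends M')
    (hd : ∀ e ∈ M, ∀ f ∈ M', ∀ v ∈ ends e, v ∉ ends f) : VertexDisjoint ends (M ∪ M') := by
  intro e he f hf v hve hvf
  rcases Finset.mem_union.1 he with he | he <;> rcases Finset.mem_union.1 hf with hf | hf
  · exact h he hf hve hvf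
  · exact absurd hvf (hd e he f hf v hve)
  · exact absurd hve (hd f hf e he v hvf)
  · exact h' he hf hve hvf

theorem VertexDisjoint.card_le_card (h : VertexDisjoint ends M) (S : Finset X)
    (hS : ∀ e ∈ M, Touches ends S e) : M.card ≤ S.card :=
  Finset.card_le_card_of_forall_subsingleton (fun e v => v ∈ ends e) hS
    fun _ _ _ he _ hf => h he.1 hf.1 he.2 hf.2

theorem VertexDisjoint.card_lt_card_of_notMem (h : VertexDisjoint ends M) (S : Finset X)
    (hS : ∀ e ∈ M, Touches ends S e) {v : X} (hv : v ∈ S) (hvM : ∀ e ∈ M, v ∉ ends e) :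
    M.card < S.card := by
  refine (h.card_le_card (S.erase v) fun e he => ?_).trans_lt (Finset.card_erase_lt_of_mem hv)
  obtain ⟨w, hw, hwe⟩ := hS e he
  exact ⟨w, Finset.mem_erase.2 ⟨fun hwv => hvM e he (hwv ▸ hwe), hw⟩, hwe⟩

namespace HasMatching

theorem zero (Γ : Finset ι) (T : Set X) : HasMatching ends Γ 0 T :=
  ⟨∅, by simp [VertexDisjoint]⟩

theorem mono (h : HasMatching ends Γ n T) (hΓ : Γ ⊆ Γ') : HasMatching ends Γ' n T :=
  let ⟨M, hM, hM'⟩ := h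
  ⟨M, hM.trans hΓ, hM'⟩

theorem anti (h : HasMatching ends Γ n S) (hT : T ⊆ S) : HasMatching ends Γ n T :=
  let ⟨M, hM, hMd, hMc, hMS⟩ := h
  ⟨M, hM, hMd, hMc, fun e he v hv hvT => hMS e he v hv (hT hvT)⟩

theorem of_le {m : ℕ} (h : HasMatching ends Γ n T) (hm : m ≤ n) : HasMatching ends Γ m T := by
  obtain ⟨M, hM, hMd, rfl, hMT⟩ := h
  obtain ⟨M', hM', hc⟩ := Finset.exists_subset_card_eq hm
  exact ⟨M', hM'.trans hM, hMd.subset hM', hc, fun e he => hMT e (hM' he)⟩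

theorem union {m : ℕ} (h : HasMatching ends Γ m T) (h' : HasMatching ends Γ' n T)
    (hd : ∀ e ∈ Γ, ∀ f ∈ Γ', ∀ v ∈ ends e, v ∉ ends f) :
    HasMatching ends (Γ ∪ Γ') (m + n) T := by
  obtain ⟨M, hM, hMd, rfl, hMT⟩ := h
  obtain ⟨M', hM', hMd', rfl, hMT'⟩ := h'
  refine ⟨M ∪ M', Finset.union_subset_union hM hM',
    hMd.union hMd' fun e he f hf => hd e (hM he) f (hM' hf), ?_, fun e he => ?_⟩
  · refine Finset.card_union_of_disjoint (Finset.disjoint_left.2 fun e he he' => ?_)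
    exact hd e (hM he) e (hM' he') _ (Sym2.out_fst_mem _) (Sym2.out_fst_mem _)
  · exact (Finset.mem_union.1 he).elim (hMT e) (hMT' e)

theorem iff_filter :
    HasMatching ends Γ n T ↔ HasMatching ends (Γ.filter (¬ Touches ends T ·)) n ∅ := by
  constructor
  · rintro ⟨M, hM, hMd, hc, hMT⟩
    exact ⟨M, fun e he => Finset.mem_filter.2 ⟨hM he, fun ⟨v, hv, hve⟩ => hMT e he v hve hv⟩,
      hMd, hc, by simp⟩
  · rintro ⟨M, hM, hMd, hc, -⟩
    exact ⟨M, hM.trans (Finset.filter_subset _ _), hMd, hc,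
      fun e he v hve hv => (Finset.mem_filter.1 (hM he)).2 ⟨v, hv, hve⟩⟩

theorem add_edge (h : HasMatching ends Γ n S) {e : ι} (he : e ∈ Γ) {x y : X}
    (hxy : ends e = s(x, y)) (hS : insert x (insert y T) ⊆ S) (hx : x ∉ T) (hy : y ∉ T) :
    HasMatching ends Γ (n + 1) T := by
  obtain ⟨M, hM, hMd, rfl, hMS⟩ := h
  have hav : ∀ f ∈ ({e} : Finset ι), ∀ g ∈ M, ∀ v ∈ ends f, v ∉ ends g := by
    simp only [Finset.mem_singleton, forall_eq, hxy, Sym2.mem_iff]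
    exact fun g hg v hv hvg => hMS g hg v hvg (hS (by grind))
  have heM : e ∉ M := fun heM => hav e (by simp) e heM x (by simp [hxy]) (by simp [hxy])
  refine ⟨{e} ∪ M, Finset.union_subset (by simpa) hM,
    .union (by simp [VertexDisjoint]) hMd hav, ?_, ?_⟩
  · rw [Finset.singleton_union, Finset.card_insert_of_notMem heM]
  · simp only [Finset.singleton_union, Finset.forall_mem_insert, hxy, Sym2.ball]
    exact ⟨⟨hx, hy⟩, fun f hf v hv hvT => hMS f hf v hv (hS (by grind))⟩

theorem avoid_or_cover (h : HasMatching ends Γ n T) (w : X) :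
    HasMatching ends Γ n (insert w T) ∨ ∃ m e y, n = m + 1 ∧ e ∈ Γ ∧ ends e = s(w, y) ∧
      w ∉ T ∧ y ∉ T ∧ HasMatching ends Γ m (insert w (insert y T)) := by
  obtain ⟨M, hM, hMd, rfl, hMT⟩ := h
  by_cases hw : ∃ e ∈ M, w ∈ ends e
  · obtain ⟨e, he, hwe⟩ := hw
    obtain ⟨y, hy⟩ := Sym2.mem_iff_exists.1 hwe
    have hye : y ∈ ends e := hy ▸ Sym2.mem_mk_right w y
    refine .inr ⟨_, e, y, (Finset.card_erase_add_one he).symm, hM he, hy, hMT e he w hwe,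
      hMT e he y hye, M.erase e, (Finset.erase_subset _ _).trans hM,
      hMd.subset (Finset.erase_subset _ _), rfl, fun f hf v hv => ?_⟩
    obtain ⟨hfe, hf⟩ := Finset.mem_erase.1 hf
    rintro (rfl | rfl | hvT)
    · exact hfe (hMd hf he hv hwe)
    · exact hfe (hMd hf he hv hye)
    · exact hMT f hf v hv hvT
  · push Not at hw
    refine .inl ⟨M, hM, hMd, rfl, fun e he v hv => ?_⟩
    rintro (rfl | hvT)
    · exact hw e he hv
    · exact hMT e he v hv hvT

/-- Two steps of an alternating path from `y`: either the first matching can avoid `y`, or it covers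
`y` by an edge `s(y, w)` and the second one, being maximum, covers `w` by an edge `s(w, y')`. -/
theorem avoid_or_alternate {m : ℕ} {y : X} (h₁ : HasMatching ends Γ m S)
    (h₂ : HasMatching ends Γ n (insert y T)) (hTS : T ⊆ S)
    (hmax : ¬ HasMatching ends Γ (n + 1) T) :
    HasMatching ends Γ m (insert y S) ∨ ∃ m' n' w y' e₁ e₂, (m = m' + 1 ∧ n = n' + 1) ∧
      (e₁ ∈ Γ ∧ ends e₁ = s(y, w)) ∧ (e₂ ∈ Γ ∧ ends e₂ = s(w, y')) ∧
      y ∉ S ∧ w ∉ insert y S ∧ y' ∉ insert y T ∧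
      HasMatching ends Γ m' (insert y (insert w S)) ∧
      HasMatching ends Γ n' (insert w (insert y' (insert y T))) ∧
      ¬ HasMatching ends Γ n (insert y (insert w T)) := by
  rcases h₁.avoid_or_cover y with h | ⟨m', e₁, w, rfl, he₁, hye₁, hyS, hwS, h₁'⟩
  · exact .inl h
  have hmax' : ¬ HasMatching ends Γ n (insert y (insert w T)) := fun h =>
    hmax (h.add_edge he₁ hye₁ subset_rfl (mt (@hTS y) hyS) (mt (@hTS w) hwS))
  rcases h₂.avoid_or_cover w with h | ⟨n', e₂, y', rfl, he₂, hwe₂, hwT, hyT, h₂'⟩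
  · exact absurd (h.anti (by grind)) hmax'
  · exact .inr ⟨m', n', w, y', e₁, e₂, ⟨rfl, rfl⟩, ⟨he₁, hye₁⟩, ⟨he₂, hwe₂⟩, hyS, by grind, hyT,
      h₁', h₂', hmax'⟩

theorem gallai_exchange {x y z : X} (hxz : x ≠ z) (hmax : ¬ HasMatching ends Γ (n + 1) T)
    (h₁ : HasMatching ends Γ n (insert x (insert z T))) (h₂ : HasMatching ends Γ n (insert y T)) :
    HasMatching ends Γ n (insert y (insert x T)) ∨
      HasMatching ends Γ n (insert y (insert z T)) := by
  induction n generalizing T y with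
  | zero => exact .inl (zero _ _)
  | succ n ih =>
    rcases h₁.avoid_or_alternate h₂ (by grind) hmax with h | ⟨m', n', w, y', e₁, e₂, ⟨hm, hn⟩,
      -, ⟨he₂, hwe₂⟩, hy, hw, hy', h₁', h₂', hmax'⟩
    · exact .inl (h.anti (by grind))
    obtain ⟨rfl, rfl⟩ : n = m' ∧ n = n' := by lia
    specialize ih (y := y') hmax'
    by_cases hyx : y' = x
    · exact .inr (h₁'.add_edge he₂ hwe₂ (by grind) (by grind) (by grind))
    by_cases hyz : y' = z
    · exact .inl (h₁'.add_edge he₂ hwe₂ (by grind) (by grind) (by grind))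
    exact (ih (h₁'.anti (by grind)) (h₂'.anti (by grind))).imp
      (fun h => h.add_edge he₂ hwe₂ (by grind) (by grind) (by grind))
      (fun h => h.add_edge he₂ hwe₂ (by grind) (by grind) (by grind))

theorem stability_exchange {d x a : X} (hmax : ¬ HasMatching ends Γ (n + 2) T)
    (h₁ : HasMatching ends Γ (n + 1) (insert d T))
    (h₂ : HasMatching ends Γ n (insert x (insert a T))) :
    HasMatching ends Γ (n + 1) (insert x T) ∨ HasMatching ends Γ (n + 1) (insert a T) ∨
      HasMatching ends Γ n (insert d (insert x (insert a T))) := by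
  induction n generalizing T d with
  | zero => exact .inr (.inr (zero _ _))
  | succ n ih =>
    rcases h₂.avoid_or_alternate h₁ (by grind) hmax with h | ⟨m', n', w, d', e₁, e₂, ⟨hm, hn⟩,
      ⟨he₁, hde₁⟩, ⟨he₂, hwe₂⟩, hd, hw, hd', h₂', h₁', hmax'⟩
    · exact .inr (.inr h)
    obtain ⟨rfl, rfl⟩ : n = m' ∧ n + 1 = n' := by lia
    specialize ih (d := d') hmax'
    by_cases hx : d' = x
    · exact .inl (h₁'.add_edge he₁ hde₁ (by grind) (by grind) (by grind))
    by_cases ha : d' = a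
    · exact .inr (.inl (h₁'.add_edge he₁ hde₁ (by grind) (by grind) (by grind)))
    rcases ih (h₁'.anti (by grind)) (h₂'.anti (by grind)) with h | h | h
    · exact .inl (h.add_edge he₁ hde₁ (by grind) (by grind) (by grind))
    · exact .inr (.inl (h.add_edge he₁ hde₁ (by grind) (by grind) (by grind)))
    · exact .inr (.inr (h.add_edge he₂ hwe₂ (by grind) (by grind) (by grind)))

theorem bipartite_exchange {B : Set X} {a d : X}
    (hB : ∀ e ∈ Γ, ∀ x y, ends e = s(x, y) → (x ∈ B ↔ y ∉ B)) (had : a ∈ B ↔ d ∉ B)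
    (hmax : ¬ HasMatching ends Γ (n + 1) T) (h₁ : HasMatching ends Γ n (insert a T))
    (h₂ : HasMatching ends Γ n (insert d T)) :
    HasMatching ends Γ n (insert a (insert d T)) := by
  induction n generalizing T d with
  | zero => exact zero _ _
  | succ n ih =>
    rcases h₁.avoid_or_alternate h₂ (by grind) hmax with h | ⟨m', n', w, d', e₁, e₂, ⟨hm, hn⟩,
      ⟨he₁, hde₁⟩, ⟨he₂, hwe₂⟩, hd, hw, hd', h₁', h₂', hmax'⟩
    · exact h.anti (by grind)
    obtain ⟨rfl, rfl⟩ : n = m' ∧ n = n' := by lia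
    have hdw := hB e₁ he₁ _ _ hde₁
    have hwd' := hB e₂ he₂ _ _ hwe₂
    specialize ih (d := d') (by tauto) hmax'
    exact (ih (h₁'.anti (by grind)) (h₂'.anti (by grind))).add_edge he₂ hwe₂
      (by grind) (by grind) (by grind)

/-- Gallai's stability lemma: deleting a vertex `a` that all maximum matchings cover and that has a
neighbour `d` which some maximum matching misses does not change the set of missable vertices. -/
theorem stability {a d : X} {e : ι} (he : e ∈ Γ) (hade : ends e = s(a, d)) (hdT : d ∉ T)
    (hmax : ¬ HasMatching ends Γ (n + 1) T) (hd : HasMatching ends Γ n (insert d T))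
    (ha : ¬ HasMatching ends Γ n (insert a T)) :
    ∃ r, n = r + 1 ∧ HasMatching ends Γ r (insert a T) ∧
      ∀ x, x ∉ insert a T → (HasMatching ends Γ r (insert x (insert a T)) ↔
        HasMatching ends Γ n (insert x T)) := by
  have hn : HasMatching ends Γ n T := hd.anti (Set.subset_insert _ _)
  rcases hn.avoid_or_cover a with h | ⟨r, e', y, rfl, -, -, haT, -, h'⟩
  · exact absurd h ha
  refine ⟨r, rfl, h'.anti (by grind), fun x hxT => ⟨fun hx => ?_, fun hx => ?_⟩⟩
  · by_cases hdx : x = d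
    · exact hdx ▸ hd
    rcases stability_exchange hmax hd hx with h | h | h
    · exact h
    · exact absurd h ha
    · exact h.add_edge he hade (by grind) (by grind) (by grind)
  · rcases hx.avoid_or_cover a with h | ⟨r', e', y, hr', -, -, -, -, h''⟩
    · exact absurd (h.anti (by grind)) ha
    obtain rfl : r = r' := by lia
    exact h''.anti (by grind)

theorem stability_finset (h : HasMatching ends Γ n ∅) (hmax : ¬ HasMatching ends Γ (n + 1) ∅)
    (A : Finset X) (hA : ∀ a ∈ A, ¬ HasMatching ends Γ n {a} ∧
      ∃ e ∈ Γ, ∃ d, ends e = s(a, d) ∧ HasMatching ends Γ n {d}) :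
    ∃ r, r + A.card = n ∧ HasMatching ends Γ r A ∧ ¬ HasMatching ends Γ (r + 1) A ∧
      ∀ x, x ∉ A → (HasMatching ends Γ r (insert x (A : Set X)) ↔ HasMatching ends Γ n {x}) := by
  induction A using Finset.induction_on with
  | empty => exact ⟨n, by simp, by simpa using h, by simpa using hmax, by simp⟩
  | insert a A haA ih =>
    obtain ⟨r, rfl, hr, hrmax, hiff⟩ := ih fun b hb => hA b (Finset.mem_insert_of_mem hb)
    obtain ⟨ha, e, he, d, hade, hd⟩ := hA a (Finset.mem_insert_self _ _)
    have hdA : d ∉ A := fun hdA => (hA d (Finset.mem_insert_of_mem hdA)).1 hd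
    have ha' := mt (hiff a haA).1 ha
    obtain ⟨r', rfl, hr', hiff'⟩ := stability he hade (by simpa using hdA) hrmax
      ((hiff d hdA).2 hd) ha'
    refine ⟨r', by grind, ?_, ?_, fun x hx => ?_⟩
    · rwa [Finset.coe_insert]
    · rwa [Finset.coe_insert]
    · rw [Finset.mem_insert, not_or] at hx
      rw [Finset.coe_insert, hiff' x (by simpa using hx), hiff x hx.2]

end HasMatching

/-- The edge sets that contain a matching of size `n` avoiding `T`. -/
def matchSets (ends : ι → Sym2 X) (n : ℕ) (T : Set X) : Set (Finset ι) :=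
  {Γ | HasMatching ends Γ n T}

/-- The edge sets of matching number exactly `n`. -/
def levelSets (ends : ι → Sym2 X) (n : ℕ) : Set (Finset ι) :=
  matchSets ends n ∅ \ matchSets ends (n + 1) ∅

theorem mem_matchSets : Γ ∈ matchSets ends n T ↔ HasMatching ends Γ n T := .rfl

theorem mem_levelSets :
    Γ ∈ levelSets ends n ↔ HasMatching ends Γ n ∅ ∧ ¬ HasMatching ends Γ (n + 1) ∅ := .rfl

theorem isUpperSet_matchSets : IsUpperSet (matchSets ends n T) :=
  fun _ _ hΓ h => h.mono hΓ

theorem ordConnected_levelSets : (levelSets ends n).OrdConnected :=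
  isUpperSet_matchSets.ordConnected.inter isUpperSet_matchSets.compl.ordConnected

variable {H E : Finset ι} {c : ℕ}

theorem acyclicAbove_Icc_sdiff_matchSets
    (h : ∀ j ≤ n, AcyclicAbove E (Set.Icc H E ∩ levelSets ends j) (c * j)) :
    AcyclicAbove E (Set.Icc H E \ matchSets ends (n + 1) ∅) (c * n) := by
  induction n with
  | zero =>
    convert h 0 le_rfl using 1
    ext s
    have := HasMatching.zero (ends := ends) s ∅
    simp only [Set.mem_sdiff, Set.mem_inter_iff, mem_matchSets, mem_levelSets]
    tauto
  | succ n ih =>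
    refine .union (Set.ordConnected_Icc.inter isUpperSet_matchSets.compl.ordConnected)
      (isUpperSet_matchSets (ends := ends) (n := n + 1) (T := ∅)) ?_ ?_
    · convert (ih fun j hj => h j (by lia)).mono (Nat.mul_le_mul_left c n.le_succ) using 1
      ext s
      have (h : HasMatching ends s (n + 2) ∅) : HasMatching ends s (n + 1) ∅ := h.of_le (by lia)
      simp only [Set.mem_sdiff, mem_matchSets]
      tauto
    · convert h (n + 1) le_rfl using 1
      ext s
      simp only [Set.mem_sdiff, Set.mem_inter_iff, mem_matchSets, mem_levelSets]
      tauto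

theorem acyclicAbove_Icc_inter_matchSets (hH : H.card ≤ 1)
    (h : ∀ j ≤ n, AcyclicAbove E (Set.Icc H E ∩ levelSets ends j) (c * j)) :
    AcyclicAbove E (Set.Icc H E ∩ matchSets ends (n + 1) ∅) (c * n + 1) :=
  .quot Set.ordConnected_Icc isUpperSet_matchSets ((AcyclicAbove.Icc E H).mono (by lia))
    (acyclicAbove_Icc_sdiff_matchSets h)

theorem acyclicAbove_Icc_inter_matchSets_of_card_le_one (hH : H.card ≤ 1) (T : Set X)
    (h : ∀ H' E', E' ⊆ E → H'.card ≤ 1 → ∀ j ≤ n,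
      AcyclicAbove E' (Set.Icc H' E' ∩ levelSets ends j) (c * j)) :
    AcyclicAbove E (Set.Icc H E ∩ matchSets ends (n + 1) T) (c * n + 2) := by
  have hT : matchSets ends (n + 1) T ⊆ matchSets ends (n + 1) ∅ := fun s hs =>
    HasMatching.anti hs (Set.empty_subset T)
  have hlt : AcyclicAbove E (Set.Icc H E \ matchSets ends (n + 1) T) (c * n + 1) := by
    have hfilter : (H.filter (Touches ends T)).card ≤ 1 := (Finset.card_filter_le _ _).trans hH
    have hprod := AcyclicAbove.prod_filter
      (U₁ := Set.univ) (U₂ := (matchSets ends (n + 1) ∅)ᶜ) (p := Touches ends T)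
      (by simpa using AcyclicAbove.Icc (E.filter (Touches ends T)) (H.filter (Touches ends T)))
      (acyclicAbove_Icc_sdiff_matchSets
        (h _ _ (Finset.filter_subset _ _) ((Finset.card_filter_le _ _).trans hH)))
    convert hprod.mono (t' := c * n + 1) (by lia) using 1
    ext s
    simp [mem_matchSets, HasMatching.iff_filter (T := T)]
  have hmid : AcyclicAbove E
      ((Set.Icc H E \ matchSets ends (n + 1) T) ∩ matchSets ends (n + 1) ∅) (c * n + 1) := by
    refine .quot hlt.ordConnected isUpperSet_matchSets hlt ?_
    rw [sdiff_sdiff, sup_eq_right.2 hT]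
    exact acyclicAbove_Icc_sdiff_matchSets (h H E subset_rfl hH)
  have hge : AcyclicAbove E (Set.Icc H E ∩ matchSets ends (n + 1) ∅) (c * n + 2) :=
    (acyclicAbove_Icc_inter_matchSets hH (h H E subset_rfl hH)).mono (by lia)
  rw [← Set.inter_eq_right.2 hT, ← Set.inter_assoc]
  refine .quot hge.ordConnected isUpperSet_matchSets hge ?_
  rwa [Set.inter_sdiff_right_comm]

end Matching

/-! ## Bipartite edge sets -/

section Bipartite

variable {ι X : Type*} {ends : ι → Sym2 X} {E H Γ Γ' : Finset ι} {B : Set X} {S₁ S₂ : Finset X}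
  {m n : ℕ}

/-- Every edge in `E` joins a vertex outside `B` with a vertex in `B`. -/
def IsBipartite (ends : ι → Sym2 X) (B : Set X) (E : Finset ι) : Prop :=
  ∀ e ∈ E, ∃ j p, ends e = s(j, p) ∧ j ∉ B ∧ p ∈ B

/-- The vertices in `B` that some matching of size `n` in `Γ` misses. -/
def missable (ends : ι → Sym2 X) (B : Set X) (n : ℕ) (Γ : Finset ι) : Set X :=
  {p ∈ B | HasMatching ends Γ n {p}}

/-- The vertices joined to a vertex in `D` by an edge in `Γ`. -/
def nbhd (ends : ι → Sym2 X) (D : Set X) (Γ : Finset ι) : Set X :=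
  {j | ∃ e ∈ Γ, ∃ p ∈ D, ends e = s(j, p)}

/-- The vertex sets of the Dulmage–Mendelsohn decomposition: for a bipartite edge set of matching
number `n`, the first set consists of the vertices in `B` left uncovered by some maximum matching,
and the second of their neighbours. -/
def dulmageMendelsohn (ends : ι → Sym2 X) (B : Set X) (n : ℕ) (Γ : Finset ι) : Set X × Set X :=
  (missable ends B n Γ, nbhd ends (missable ends B n Γ) Γ)

/-- The edge sets with a matching of size `n` such that, moreover, each vertex in `B` is missed by
one. -/
def avoidingSets (ends : ι → Sym2 X) (B : Set X) (n : ℕ) : Set (Finset ι) :=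
  {Γ | HasMatching ends Γ n ∅ ∧ ∀ p ∈ B, HasMatching ends Γ n {p}}

/-- For `S₁ ⊆ B` and `S₂` disjoint from `B`, the bipartite edge sets whose Dulmage–Mendelsohn
decomposition is `(B \ S₁, S₂)`: the vertices in `S₁ ∪ S₂` cover all edges, the edges that avoid
`S₂` match `S₁`, and those that avoid `S₁` match `S₂` with surplus. -/
def dulmageMendelsohnSets (ends : ι → Sym2 X) (B : Set X) (S₁ S₂ : Finset X) : Set (Finset ι) :=
  {Γ | (∀ e ∈ Γ, Touches ends S₁ e ∨ Touches ends S₂ e) ∧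
    Γ.filter (¬ Touches ends S₂ ·) ∈ matchSets ends S₁.card ∅ ∧
    Γ.filter (¬ Touches ends S₁ ·) ∈ avoidingSets ends (B \ S₁) S₂.card}

theorem IsBipartite.subset (h : IsBipartite ends B E) (hΓ : Γ ⊆ E) : IsBipartite ends B Γ :=
  fun e he => h e (hΓ he)

theorem IsBipartite.mem_iff (h : IsBipartite ends B E) :
    ∀ e ∈ E, ∀ x y, ends e = s(x, y) → (x ∈ B ↔ y ∉ B) := by
  intro e he x y hxy
  obtain ⟨j, p, hjp, hj, hp⟩ := h e he
  grind

theorem IsBipartite.eq_of_mem (h : IsBipartite ends B E) {e : ι} (he : e ∈ E) {x y : X}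
    (hx : x ∈ ends e) (hy : y ∈ ends e) (hxy : x ∈ B ↔ y ∈ B) : x = y := by
  obtain ⟨j, p, hjp, hj, hp⟩ := h e he
  rw [hjp, Sym2.mem_iff] at hx hy
  grind

theorem isUpperSet_avoidingSets : IsUpperSet (avoidingSets ends B n) :=
  fun _ _ hΓ h => ⟨h.1.mono hΓ, fun p hp => (h.2 p hp).mono hΓ⟩

theorem missable_mono (hΓ : Γ ⊆ Γ') : missable ends B n Γ ⊆ missable ends B n Γ' :=
  fun _ hp => ⟨hp.1, hp.2.mono hΓ⟩

theorem nbhd_mono {D D' : Set X} (hD : D ⊆ D') (hΓ : Γ ⊆ Γ') : nbhd ends D Γ ⊆ nbhd ends D' Γ' :=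
  fun _ ⟨e, he, p, hp, hjp⟩ => ⟨e, hΓ he, p, hD hp, hjp⟩

theorem monotone_dulmageMendelsohn : Monotone (dulmageMendelsohn ends B n) :=
  fun _ _ hΓ => ⟨missable_mono hΓ, nbhd_mono (missable_mono hΓ) hΓ⟩

theorem finite_setOf_mem_ends (ends : ι → Sym2 X) (Γ : Finset ι) :
    {v | ∃ e ∈ Γ, v ∈ ends e}.Finite := by
  refine (Γ.biUnion fun e => (ends e).toFinset).finite_toSet.subset fun v ⟨e, he, hv⟩ => ?_
  simpa using ⟨e, he, hv⟩

theorem finite_nbhd (ends : ι → Sym2 X) (D : Set X) (Γ : Finset ι) : (nbhd ends D Γ).Finite :=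
  (finite_setOf_mem_ends ends Γ).subset fun j ⟨e, he, p, _, hjp⟩ =>
    ⟨e, he, hjp ▸ Sym2.mem_mk_left j p⟩

theorem HasMatching.filter_not_touches {T : Set X} {S : Finset X}
    (h : HasMatching ends Γ (S.card + n) T) :
    HasMatching ends (Γ.filter (¬ Touches ends S ·)) n T := by
  obtain ⟨M, hM, hMd, hcard, hMT⟩ := h
  have hS := (hMd.subset (Finset.filter_subset (Touches ends S) M)).card_le_card S
    fun e he => (Finset.mem_filter.1 he).2
  have hsum := Finset.card_filter_add_card_filter_not (s := M) (Touches ends S)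
  exact of_le ⟨M.filter (¬ Touches ends S ·), Finset.filter_subset_filter _ hM,
    hMd.subset (Finset.filter_subset _ _), rfl, fun e he => hMT e (Finset.mem_filter.1 he).1⟩
    (by lia)

theorem IsBipartite.touches_sdiff_or_touches_nbhd (hB : IsBipartite ends B Γ) (D : Set X) {e : ι}
    (he : e ∈ Γ) : Touches ends (B \ D) e ∨ Touches ends (nbhd ends D Γ) e := by
  obtain ⟨j, p, hjp, -, hp⟩ := hB e he
  by_cases hpD : p ∈ D
  · exact .inr ⟨j, ⟨e, he, p, hpD, hjp⟩, by simp [hjp]⟩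
  · exact .inl ⟨p, ⟨hp, hpD⟩, by simp [hjp]⟩

theorem IsBipartite.not_hasMatching_of_mem_nbhd (hB : IsBipartite ends B Γ)
    (hmax : ¬ HasMatching ends Γ (n + 1) ∅) {a : X}
    (ha : a ∈ nbhd ends (missable ends B n Γ) Γ) : a ∉ B ∧ ¬ HasMatching ends Γ n {a} := by
  obtain ⟨e, he, d, ⟨hdB, hd⟩, had⟩ := ha
  have haB : a ∉ B := fun haB => (hB.mem_iff e he _ _ had).1 haB hdB
  refine ⟨haB, fun h => hmax ?_⟩
  refine (HasMatching.bipartite_exchange hB.mem_iff (by tauto) hmax (by simpa using h)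
    (by simpa using hd)).add_edge he had (by simp) (by simp) (by simp)

theorem IsBipartite.exists_dulmageMendelsohn_eq (hB : IsBipartite ends B Γ)
    (hΓ : Γ ∈ levelSets ends m) :
    ∃ S₁ S₂ : Finset X, S₁.card + S₂.card = m ∧ ↑S₁ ⊆ B ∧ Disjoint B S₂ ∧
      dulmageMendelsohn ends B m Γ = (B \ S₁, ↑S₂) := by
  obtain ⟨h₀, hmax⟩ := hΓ
  set D := missable ends B m Γ
  have hcover (e : ι) (he : e ∈ Γ) := hB.touches_sdiff_or_touches_nbhd D he
  obtain ⟨S₂, hS₂⟩ := (finite_nbhd ends D Γ).exists_finset_coe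
  have hS₂B (a : X) (ha : a ∈ S₂) := hB.not_hasMatching_of_mem_nbhd hmax (hS₂.le ha)
  obtain ⟨r, hr, ⟨M, hM, hMd, hMr, hMS₂⟩, -, hiff⟩ := HasMatching.stability_finset h₀ hmax S₂
    fun a ha => ⟨(hS₂B a ha).2, by
      obtain ⟨e, he, d, hd, had⟩ := hS₂.le ha
      exact ⟨e, he, d, had, hd.2⟩⟩
  have hcovered (p : X) (hp : p ∈ B \ D) : ∃ e ∈ M, p ∈ ends e := by
    by_contra! hpM
    have hpS₂ : p ∉ S₂ := fun hpS₂ => (hS₂B p hpS₂).1 hp.1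
    refine hp.2 ⟨hp.1, (hiff p hpS₂).1 ⟨M, hM, hMd, hMr, fun e he v hv => ?_⟩⟩
    rintro (rfl | hvS₂)
    exacts [hpM e he hv, hMS₂ e he v hv hvS₂]
  obtain ⟨S₁, hS₁⟩ := ((finite_setOf_mem_ends ends M).subset hcovered).exists_finset_coe
  rw [← hS₁] at hcovered
  rw [← hS₁, ← hS₂] at hcover
  have hS₁r : S₁.card = r := by
    refine le_antisymm (hMr ▸ ?_) (hMr ▸ hMd.card_le_card S₁ fun e he => ?_)
    · exact Finset.card_le_card_of_forall_subsingleton (fun p e => p ∈ ends e) hcovered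
        fun e he p hp q hq => hB.eq_of_mem (hM he) hp.2 hq.2
            (iff_of_true (hS₁.le hp.1).1 (hS₁.le hq.1).1)
    · exact (hcover e (hM he)).resolve_right fun ⟨v, hv, hve⟩ => hMS₂ e he v hve hv
  refine ⟨S₁, S₂, by lia, hS₁.trans_subset Set.sdiff_subset,
    Set.disjoint_right.2 fun a ha => (hS₂B a ha).1, ?_⟩
  rw [hS₁, Set.sdiff_sdiff_cancel_left fun p hp => hp.1, hS₂, dulmageMendelsohn]

theorem IsBipartite.hasMatching_add (hB : IsBipartite ends B Γ) (hS₁ : ↑S₁ ⊆ B)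
    (hS₂ : Disjoint B S₂) (hc : ∀ e ∈ Γ, Touches ends S₁ e ∨ Touches ends S₂ e) {T : Set X}
    (hT : T ⊆ B \ S₁) (h₁ : HasMatching ends (Γ.filter (¬ Touches ends S₂ ·)) m ∅)
    (h₂ : HasMatching ends (Γ.filter (¬ Touches ends S₁ ·)) n T) :
    HasMatching ends Γ (m + n) T := by
  have hmem₁ {e : ι} (he : e ∈ Γ ∧ ¬ Touches ends S₂ e) {v : X} (hv : v ∈ ends e)
      (hvB : v ∈ B) : v ∈ S₁ := by
    obtain ⟨w, hw, hwe⟩ := (hc e he.1).resolve_right he.2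
    exact hB.eq_of_mem he.1 hv hwe (iff_of_true hvB (hS₁ hw)) ▸ hw
  have hmem₂ {e : ι} (he : e ∈ Γ ∧ ¬ Touches ends S₁ e) {v : X} (hv : v ∈ ends e)
      (hvB : v ∉ B) : v ∈ S₂ := by
    obtain ⟨w, hw, hwe⟩ := (hc e he.1).resolve_left he.2
    exact hB.eq_of_mem he.1 hv hwe (iff_of_false hvB (Set.disjoint_right.1 hS₂ hw)) ▸ hw
  have h₁' : HasMatching ends (Γ.filter (¬ Touches ends S₂ ·)) m T := by
    obtain ⟨M, hM, hMd, hMm, -⟩ := h₁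
    exact ⟨M, hM, hMd, hMm, fun e he v hv hvT =>
      (hT hvT).2 (hmem₁ (Finset.mem_filter.1 (hM he)) hv (hT hvT).1)⟩
  refine (h₁'.union h₂ fun e he f hf v hve hvf => ?_).mono
    (Finset.union_subset (Finset.filter_subset _ _) (Finset.filter_subset _ _))
  rw [Finset.mem_filter] at he hf
  by_cases hvB : v ∈ B
  · exact hf.2 ⟨v, hmem₁ he hve hvB, hvf⟩
  · exact he.2 ⟨v, hmem₂ hf hvf hvB, hve⟩

theorem not_hasMatching_of_cover (hc : ∀ e ∈ Γ, Touches ends S₁ e ∨ Touches ends S₂ e) :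
    ¬ HasMatching ends Γ (S₁.card + S₂.card + 1) ∅ := by
  rintro ⟨M, hM, hMd, hMc, -⟩
  have := hMd.card_le_card (S₁ ∪ S₂) fun e he => by
    simpa [Touches, or_and_right, exists_or] using hc e (hM he)
  have := Finset.card_union_le S₁ S₂
  lia

theorem not_hasMatching_singleton_of_cover
    (hc : ∀ e ∈ Γ, Touches ends S₁ e ∨ Touches ends S₂ e) {p : X} (hp : p ∈ S₁) :
    ¬ HasMatching ends Γ (S₁.card + S₂.card) {p} := by
  rintro ⟨M, hM, hMd, hMc, hMp⟩
  have := hMd.card_lt_card_of_notMem (S₁ ∪ S₂)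
    (fun e he => by simpa [Touches, or_and_right, exists_or] using hc e (hM he))
    (Finset.mem_union_left S₂ hp) fun e he hpe => hMp e he p hpe rfl
  have := Finset.card_union_le S₁ S₂
  lia

theorem IsBipartite.nbhd_sdiff_eq (hB : IsBipartite ends B Γ) (hS₁ : ↑S₁ ⊆ B)
    (hS₂ : Disjoint B S₂) (hc : ∀ e ∈ Γ, Touches ends S₁ e ∨ Touches ends S₂ e)
    (h : HasMatching ends (Γ.filter (¬ Touches ends S₁ ·)) S₂.card ∅) :
    nbhd ends (B \ S₁) Γ = S₂ := by
  ext j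
  constructor
  · rintro ⟨e, he, p, ⟨hpB, hpS₁⟩, hjp⟩
    have hjB : j ∉ B := fun hjB => (hB.mem_iff e he _ _ hjp).1 hjB hpB
    have hc := hc e he
    rw [touches_iff_of_eq_mk hjp, touches_iff_of_eq_mk hjp] at hc
    have hpS₂ := Set.disjoint_left.1 hS₂ hpB
    have hjS₁ := mt (@hS₁ j) hjB
    tauto
  · intro hj
    obtain ⟨M, hM, hMd, hMc, -⟩ := h
    have hMΓ (e : ι) (he : e ∈ M) := Finset.mem_filter.1 (hM he)
    obtain ⟨e, he, hje⟩ : ∃ e ∈ M, j ∈ ends e := by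
      by_contra! hjM
      exact (hMd.card_lt_card_of_notMem S₂
        (fun e he => (hc e (hMΓ e he).1).resolve_left (hMΓ e he).2) hj hjM).ne hMc
    obtain ⟨p, hjp⟩ := Sym2.mem_iff_exists.1 hje
    have hpB : p ∈ B := not_not.1 fun hpB =>
      Set.disjoint_right.1 hS₂ hj ((hB.mem_iff e (hMΓ e he).1 _ _ hjp).2 hpB)
    exact ⟨e, (hMΓ e he).1, p, ⟨hpB, fun hpS₁ => (hMΓ e he).2 ⟨p, hpS₁, by simp [hjp]⟩⟩, hjp⟩

theorem IsBipartite.mem_dulmageMendelsohnSets_iff (hB : IsBipartite ends B Γ) (hS₁ : ↑S₁ ⊆ B)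
    (hS₂ : Disjoint B S₂) (hm : S₁.card + S₂.card = m) :
    Γ ∈ dulmageMendelsohnSets ends B S₁ S₂ ↔
      Γ ∈ levelSets ends m ∧ dulmageMendelsohn ends B m Γ = (B \ S₁, ↑S₂) := by
  subst hm
  rw [Prod.ext_iff]
  constructor
  · rintro ⟨hc, h₁, h₂, h₂'⟩
    have hD : missable ends B (S₁.card + S₂.card) Γ = B \ S₁ := Set.ext fun p =>
      ⟨fun hp => ⟨hp.1, fun hpS₁ => not_hasMatching_singleton_of_cover hc hpS₁ hp.2⟩, fun hp =>
        ⟨hp.1, hB.hasMatching_add hS₁ hS₂ hc (Set.singleton_subset_iff.2 hp) h₁ (h₂' p hp)⟩⟩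
    refine ⟨⟨?_, not_hasMatching_of_cover hc⟩, hD, ?_⟩
    · exact hB.hasMatching_add hS₁ hS₂ hc (Set.empty_subset _) h₁ h₂
    · rw [dulmageMendelsohn, hD, hB.nbhd_sdiff_eq hS₁ hS₂ hc h₂]
  · rintro ⟨⟨h₀, -⟩, hD, hN⟩
    dsimp only [dulmageMendelsohn] at hD hN
    rw [hD] at hN
    refine ⟨fun e he => ?_, ?_, h₀.filter_not_touches, fun p hp => ?_⟩
    · have hc := hB.touches_sdiff_or_touches_nbhd (B \ S₁) he
      rwa [hN, Set.sdiff_sdiff_cancel_left hS₁] at hc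
    · rw [mem_matchSets, add_comm] at h₀
      exact h₀.filter_not_touches
    · exact (hD.ge hp).2.filter_not_touches

theorem IsBipartite.hasMatching_iff_subset_missable (hB : IsBipartite ends B H) (hH : H.card ≤ 1) :
    HasMatching ends Γ n {v ∈ B | ∃ e ∈ H, v ∈ ends e} ↔
      HasMatching ends Γ n ∅ ∧ {v ∈ B | ∃ e ∈ H, v ∈ ends e} ⊆ missable ends B n Γ := by
  constructor
  · exact fun h => ⟨h.anti (Set.empty_subset _), fun v hv =>
      ⟨hv.1, h.anti (Set.singleton_subset_iff.2 hv)⟩⟩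
  · rintro ⟨h₀, hT⟩
    have hsub : {v ∈ B | ∃ e ∈ H, v ∈ ends e}.Subsingleton := by
      rintro v ⟨hv, e, he, hve⟩ w ⟨hw, f, hf, hwf⟩
      obtain rfl := Finset.card_le_one.1 hH e he f hf
      exact hB.eq_of_mem he hve hwf (iff_of_true hv hw)
    rcases hsub.eq_empty_or_singleton with h | ⟨v, h⟩
    · rwa [h]
    · rw [h] at hT ⊢
      exact (hT rfl).2

end Bipartite

section BipartiteBound

variable {ι X : Type*} {ends : ι → Sym2 X} {E H : Finset ι} {B : Set X} {S₁ S₂ : Finset X}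
  {m n t : ℕ}

/-- The bound for bipartite edge sets of matching number `m` that contain at most one prescribed
edge. -/
def BipartiteBound (ends : ι → Sym2 X) (m : ℕ) : Prop :=
  ∀ ⦃B E H⦄, IsBipartite ends B E → H.card ≤ 1 →
    AcyclicAbove E (Set.Icc H E ∩ levelSets ends m) (2 * m)

/-- The bound for bipartite edge sets that have a vertex cover `J` of size `m`, have a matching of
size `m` and can have any vertex in `B` removed without losing this. -/
def SurplusBound (ends : ι → Sym2 X) (m : ℕ) : Prop :=
  ∀ ⦃B E H⦄ ⦃J : Finset X⦄, IsBipartite ends B E → H.card ≤ 1 → (∀ e ∈ E, Touches ends J e) →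
    J.card = m → AcyclicAbove E (Set.Icc H E ∩ avoidingSets ends B m) (2 * m)

/-- The truncated subtraction is intended: for `S₁ = ∅` there are no edges at `S₁`. -/
theorem acyclicAbove_Icc_inter_matchSets_filter (hB : IsBipartite ends B E) (hH : H.card ≤ 1)
    (hc : ∀ e ∈ E, Touches ends S₁ e) (hBB : ∀ j < S₁.card, BipartiteBound ends j) :
    AcyclicAbove E
      (Set.Icc H E ∩ {Γ | Γ.filter (¬ Touches ends S₂ ·) ∈ matchSets ends S₁.card ∅})
      (H.card + (2 * S₁.card - 1)) := by
  have hcard {q : ι → Prop} [DecidablePred q] : (H.filter q).card ≤ H.card :=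
    Finset.card_filter_le H q
  obtain hS | ⟨n, hn⟩ : S₁.card = 0 ∨ ∃ n, S₁.card = n + 1 := by
    rcases S₁.card with _ | n <;> simp
  · obtain rfl := Finset.card_eq_zero.1 hS
    have hE : E = ∅ := Finset.eq_empty_of_forall_notMem fun e he => by simpa [Touches] using hc e he
    exact .of_subset_singleton_empty (fun s hs => Finset.subset_empty.1 (hE ▸ hs.1.2)) _
  · have hprod := AcyclicAbove.prod_filter (p := Touches ends S₂) (U₁ := Set.univ)
      (by simpa using AcyclicAbove.Icc (E.filter (Touches ends S₂)) (H.filter (Touches ends S₂)))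
      (acyclicAbove_Icc_inter_matchSets (n := n) (hcard.trans hH)
        fun j hj => hBB j (by lia) (hB.subset (Finset.filter_subset _ _)) (hcard.trans hH))
    convert hprod.mono (t' := H.card + (2 * S₁.card - 1)) ?_ using 1
    · ext s
      simp [hn]
    · have := hcard (q := Touches ends S₂)
      lia

theorem acyclicAbove_dulmageMendelsohnSets (hB : IsBipartite ends B E) (hH : H.card ≤ 1)
    (hBB : ∀ j < S₁.card, BipartiteBound ends j) (hSB : SurplusBound ends S₂.card) :
    AcyclicAbove E (Set.Icc H E ∩ dulmageMendelsohnSets ends B S₁ S₂)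
      ((H.filter (Touches ends S₁)).card + (2 * S₁.card - 1) + 2 * S₂.card) := by
  have hcard {q : ι → Prop} [DecidablePred q] : (H.filter q).card ≤ 1 :=
    (Finset.card_filter_le H q).trans hH
  set E' := E.filter fun e => Touches ends S₁ e ∨ Touches ends S₂ e
  have hB' : IsBipartite ends B E' := hB.subset (Finset.filter_subset _ _)
  have hB₂ : IsBipartite ends (B \ S₁) (E'.filter (¬ Touches ends S₁ ·)) := by
    intro e he
    obtain ⟨he, hn⟩ := Finset.mem_filter.1 he
    obtain ⟨j, p, hjp, hj, hp⟩ := hB' e he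
    exact ⟨j, p, hjp, fun h => hj h.1, hp, fun hpS => hn ⟨p, hpS, by simp [hjp]⟩⟩
  have hprod := AcyclicAbove.prod_filter
    (acyclicAbove_Icc_inter_matchSets_filter (S₂ := S₂) (hB'.subset (Finset.filter_subset _ _))
      hcard (fun e he => (Finset.mem_filter.1 he).2) hBB)
    (hSB (J := S₂) hB₂ hcard (fun e he => ?_) rfl)
  · convert hprod.mono_ground (Finset.filter_subset _ _) using 1
    ext s
    have hs (hc : ∀ e ∈ s, Touches ends S₁ e ∨ Touches ends S₂ e) :
        (s.filter (Touches ends S₁)).filter (¬ Touches ends S₂ ·) =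
          s.filter (¬ Touches ends S₂ ·) := by
      rw [Finset.filter_filter]
      exact Finset.filter_congr fun e he => and_iff_right_of_imp ((hc e he).resolve_right)
    have hsE : s ⊆ E' ↔ s ⊆ E ∧ ∀ e ∈ s, Touches ends S₁ e ∨ Touches ends S₂ e := by
      simp only [E', Finset.subset_iff, Finset.mem_filter, forall_and]
    constructor
    · rintro ⟨⟨hHs, hsE'⟩, hc, h₁, h₂⟩
      exact ⟨⟨hHs, hsE.2 ⟨hsE', hc⟩⟩, by rwa [Set.mem_ofPred_eq, hs hc], h₂⟩
    · rintro ⟨⟨hHs, hsE'⟩, h₁, h₂⟩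
      obtain ⟨hsE', hc⟩ := hsE.1 hsE'
      exact ⟨⟨hHs, hsE'⟩, hc, hs hc ▸ h₁, h₂⟩
  · obtain ⟨he, hn⟩ := Finset.mem_filter.1 he
    exact (Finset.mem_filter.1 he).2.resolve_left hn

theorem acyclicAbove_of_dulmageMendelsohnSets (hB : IsBipartite ends B E) {U : Set (Finset ι)}
    (hU : U.OrdConnected) (Q : Set X → Prop)
    (hUQ : U = {Γ ∈ Set.Icc H E ∩ levelSets ends m | Q (missable ends B m Γ)})
    (h : ∀ S₁ S₂ : Finset X, S₁.card + S₂.card = m → ↑S₁ ⊆ B → Q (B \ S₁) →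
      AcyclicAbove E (Set.Icc H E ∩ dulmageMendelsohnSets ends B S₁ S₂) t) :
    AcyclicAbove E U t := by
  refine .of_fibers (monotone_dulmageMendelsohn (ends := ends) (B := B) (n := m)) hU
    (fun s hs => (hUQ.le hs).1.1.2) fun p => ?_
  obtain hp | ⟨Γ₀, hΓ₀, rfl⟩ := Set.eq_empty_or_nonempty (U ∩ dulmageMendelsohn ends B m ⁻¹' {p})
  · exact hp ▸ .empty t
  obtain ⟨⟨hI₀, hm₀⟩, hQ⟩ := hUQ.le hΓ₀
  obtain ⟨S₁, S₂, hm, hS₁, hS₂, hΓ₀⟩ := (hB.subset hI₀.2).exists_dulmageMendelsohn_eq hm₀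
  have hD {Γ : Finset ι} (hΓ : dulmageMendelsohn ends B m Γ = (B \ S₁, ↑S₂)) :
      missable ends B m Γ = B \ S₁ := (Prod.ext_iff.1 hΓ).1
  convert h S₁ S₂ hm hS₁ (hD hΓ₀ ▸ hQ) using 1
  ext Γ
  have hiff (hΓ : Γ ⊆ E) := (hB.subset hΓ).mem_dulmageMendelsohnSets_iff hS₁ hS₂ hm
  rw [hΓ₀, hUQ]
  constructor
  · rintro ⟨⟨⟨hI, hΓm⟩, -⟩, hΓ⟩
    exact ⟨hI, (hiff hI.2).2 ⟨hΓm, hΓ⟩⟩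
  · rintro ⟨hI, hΓ⟩
    obtain ⟨hΓm, hΓ⟩ := (hiff hI.2).1 hΓ
    exact ⟨⟨⟨hI, hΓm⟩, by rwa [hD hΓ, ← hD hΓ₀]⟩, hΓ⟩

theorem bipartiteBound_of_surplusBound (hBB : ∀ j < m, BipartiteBound ends j)
    (hSB : ∀ j ≤ m, SurplusBound ends j) : BipartiteBound ends m := by
  intro B E H hB hH
  refine acyclicAbove_of_dulmageMendelsohnSets (H := H) (m := m) hB
    (Set.ordConnected_Icc.inter ordConnected_levelSets) (fun _ => True)
    (by simp only [and_true, Set.ofPred_mem_eq]) fun S₁ S₂ hm _ _ => ?_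
  refine (acyclicAbove_dulmageMendelsohnSets hB hH (fun j hj => hBB j (by lia))
    (hSB _ (by lia))).mono ?_
  rcases S₁.eq_empty_or_nonempty with rfl | hS₁
  · simp [Touches, ← hm]
  · have := hS₁.card_pos
    have := Finset.card_filter_le H (Touches ends S₁)
    lia

theorem IsBipartite.acyclicAbove_levelSets_of_not_subset (hB : IsBipartite ends B E)
    (hH : H.card ≤ 1) (hBB : ∀ j ≤ n, BipartiteBound ends j) (hSB : ∀ j ≤ n, SurplusBound ends j)
    {U : Set (Finset ι)} (hU : U.OrdConnected)
    (hUQ : U = {Γ ∈ Set.Icc H E ∩ levelSets ends (n + 1) |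
      {v ∈ B | ∃ e ∈ H, v ∈ ends e} ⊆ missable ends B (n + 1) Γ ∧
        ¬ B ⊆ missable ends B (n + 1) Γ}) :
    AcyclicAbove E U (2 * n + 1) := by
  refine acyclicAbove_of_dulmageMendelsohnSets hB hU
    (fun D => {v ∈ B | ∃ e ∈ H, v ∈ ends e} ⊆ D ∧ ¬ B ⊆ D) hUQ fun S₁ S₂ hm hS₁ ⟨hHD, hBD⟩ => ?_
  have hpos : 0 < S₁.card := by
    refine Finset.card_pos.2 (Finset.nonempty_iff_ne_empty.2 fun hS => hBD ?_)
    simp [hS]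
  have hfilter : H.filter (Touches ends S₁) = ∅ :=
    Finset.filter_eq_empty_iff.2 fun e he ⟨v, hv, hve⟩ => (hHD ⟨hS₁ hv, e, he, hve⟩).2 hv
  refine (acyclicAbove_dulmageMendelsohnSets hB hH (fun j hj => hBB j (by lia))
    (hSB _ (by lia))).mono ?_
  rw [hfilter, Finset.card_empty]
  lia

theorem surplusBound_succ (hBB : ∀ j ≤ n, BipartiteBound ends j)
    (hSB : ∀ j ≤ n, SurplusBound ends j) : SurplusBound ends (n + 1) := by
  intro B E H J hB hH hJ hJn
  set T : Set X := {v ∈ B | ∃ e ∈ H, v ∈ ends e}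
  have hge : AcyclicAbove E (Set.Icc H E ∩ matchSets ends (n + 1) T) (2 * n + 2) :=
    acyclicAbove_Icc_inter_matchSets_of_card_le_one hH T
      fun H' E' hE' hH' j hj => hBB j hj (hB.subset hE') hH'
  have hT {Γ : Finset ι} (hΓ : Γ ∈ Set.Icc H E) : Γ ∈ matchSets ends (n + 1) T ↔
      HasMatching ends Γ (n + 1) ∅ ∧ T ⊆ missable ends B (n + 1) Γ :=
    (hB.subset (hΓ.1.trans hΓ.2)).hasMatching_iff_subset_missable hH
  have hB_iff {Γ : Finset ι} : B ⊆ missable ends B (n + 1) Γ ↔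
      ∀ p ∈ B, HasMatching ends Γ (n + 1) {p} :=
    forall₂_congr fun p hp => and_iff_right hp
  have hmax {Γ : Finset ι} (hΓ : Γ ∈ Set.Icc H E) : ¬ HasMatching ends Γ (n + 2) ∅ := by
    rintro ⟨M, hM, hMd, hMc, -⟩
    have := hMd.card_le_card J fun e he => hJ e (hΓ.2 (hM he))
    lia
  have hquot := AcyclicAbove.quot hge.ordConnected isUpperSet_avoidingSets hge <|
    hB.acyclicAbove_levelSets_of_not_subset hH hBB hSB
      (hge.ordConnected.inter isUpperSet_avoidingSets.compl.ordConnected)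
      (U := (Set.Icc H E ∩ matchSets ends (n + 1) T) \ avoidingSets ends B (n + 1)) <| by
        ext Γ
        simp only [Set.mem_sdiff, Set.mem_inter_iff, Set.mem_ofPred_eq, mem_levelSets, hB_iff]
        constructor
        · rintro ⟨⟨hΓ, h⟩, hn⟩
          obtain ⟨h₀, h⟩ := (hT hΓ).1 h
          exact ⟨⟨hΓ, h₀, hmax hΓ⟩, h, fun h' => hn ⟨h₀, h'⟩⟩
        · rintro ⟨⟨hΓ, h₀, -⟩, h, hn⟩
          exact ⟨⟨hΓ, (hT hΓ).2 ⟨h₀, h⟩⟩, fun h' => hn h'.2⟩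
  rw [mul_add_one]
  convert hquot using 1
  ext Γ
  exact ⟨fun ⟨hΓ, h⟩ => ⟨⟨hΓ, (hT hΓ).2 ⟨h.1, fun v hv => hB_iff.2 h.2 hv.1⟩⟩, h⟩,
    fun ⟨⟨hΓ, _⟩, h⟩ => ⟨hΓ, h⟩⟩

theorem surplusBound_zero : SurplusBound ends 0 := by
  intro B E H J _ _ hJ hJ0
  obtain rfl := Finset.card_eq_zero.1 hJ0
  have hE : E = ∅ := Finset.eq_empty_of_forall_notMem fun e he => by simpa [Touches] using hJ e he
  exact .of_subset_singleton_empty (fun s hs => Finset.subset_empty.1 (hE ▸ hs.1.2)) _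

theorem bipartiteBound_and_surplusBound (ends : ι → Sym2 X) (m : ℕ) :
    BipartiteBound ends m ∧ SurplusBound ends m := by
  induction m using Nat.strong_induction_on with
  | _ m ih =>
    have hSB : SurplusBound ends m := by
      cases m with
      | zero => exact surplusBound_zero
      | succ n =>
        exact surplusBound_succ (fun j hj => (ih j (by lia)).1) fun j hj => (ih j (by lia)).2
    refine ⟨bipartiteBound_of_surplusBound (fun j hj => (ih j hj).1) fun j hj => ?_, hSB⟩
    rcases hj.lt_or_eq with hj | rfl
    exacts [(ih j hj).2, hSB]

end BipartiteBound

section Counting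

variable {ι X : Type*} {ends : ι → Sym2 X} {E Γ M : Finset ι} {V S : Finset X} {T : Set X} {n : ℕ}

/-- Both end points of the edge `e` lie in `S`. -/
def Inside (ends : ι → Sym2 X) (S : Set X) (e : ι) : Prop := ∀ v ∈ ends e, v ∈ S

/-- The edges in `E` are not loops and have their end points in `V`. -/
def IsLooplessOn (ends : ι → Sym2 X) (V : Finset X) (E : Finset ι) : Prop :=
  ∀ e ∈ E, ¬ (ends e).IsDiag ∧ Inside ends V e

/-- The end points of the edges in `M`. -/
noncomputable def covered (ends : ι → Sym2 X) (M : Finset ι) : Finset X :=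
  M.biUnion fun e => (ends e).toFinset

theorem mem_covered {v : X} : v ∈ covered ends M ↔ ∃ e ∈ M, v ∈ ends e := by
  simp [covered]

theorem IsLooplessOn.subset (h : IsLooplessOn ends V E) (hΓ : Γ ⊆ E) : IsLooplessOn ends V Γ :=
  fun e he => h e (hΓ he)

theorem VertexDisjoint.two_mul_card_add_card_sdiff (hM : VertexDisjoint ends M)
    (hS : IsLooplessOn ends S M) : 2 * M.card + (S \ covered ends M).card = S.card := by
  have hsub : covered ends M ⊆ S := fun v hv => by
    obtain ⟨e, he, hve⟩ := mem_covered.1 hv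
    exact (hS e he).2 v hve
  have hcard : (covered ends M).card = 2 * M.card := by
    rw [covered, Finset.card_biUnion, Finset.sum_const_nat, mul_comm]
    · exact fun e he => Sym2.card_toFinset_of_not_isDiag _ (hS e he).1
    · refine fun e he f hf hef => Finset.disjoint_left.2 fun v hve hvf => hef ?_
      exact hM he hf (Sym2.mem_toFinset.1 hve) (Sym2.mem_toFinset.1 hvf)
  rw [← hcard, add_comm, Finset.card_sdiff_add_card_eq_card hsub]

theorem VertexDisjoint.two_mul_card_le (hM : VertexDisjoint ends M) (hS : IsLooplessOn ends S M)
    {T : Finset X} (hT : ∀ e ∈ M, ∀ v ∈ ends e, v ∉ T) : 2 * M.card ≤ (S \ T).card := by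
  have := hM.two_mul_card_add_card_sdiff (S := S \ T) fun e he =>
    ⟨(hS e he).1, fun v hv => by simpa using ⟨(hS e he).2 v hv, hT e he v hv⟩⟩
  lia

/-- A matching in `Γ` that misses just `p` pairs up the vertices in `S` other than `p`. -/
theorem HasMatching.even_card_erase (hΓ : IsLooplessOn ends V Γ) (hV : V.card = 2 * n + 1)
    (hSV : S ⊆ V) (hS : ∀ e ∈ Γ, Touches ends S e → Inside ends S e) {p : X} (hp : p ∈ V)
    (h : HasMatching ends Γ n {p}) : Even (S.erase p).card := by
  obtain ⟨M, hM, hMd, rfl, hMp⟩ := h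
  have hpM : p ∈ V \ covered ends M := by
    rw [Finset.mem_sdiff, mem_covered]
    exact ⟨hp, fun ⟨e, he, hpe⟩ => hMp e he p hpe rfl⟩
  have hone := hMd.two_mul_card_add_card_sdiff (hΓ.subset hM)
  obtain ⟨q, hq⟩ := Finset.card_eq_one.1 (by lia : (V \ covered ends M).card = 1)
  obtain rfl : p = q := by simpa [hq] using hpM
  have hS' := (hMd.subset (Finset.filter_subset (Inside ends S) M)).two_mul_card_add_card_sdiff
    (S := S.erase p) fun e he => ?_
  · refine ⟨(M.filter (Inside ends S)).card, ?_⟩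
    have hempty : S.erase p \ covered ends (M.filter (Inside ends S)) = ∅ := by
      rw [Finset.sdiff_eq_empty_iff_subset]
      intro v hv
      obtain ⟨hvp, hvS⟩ := Finset.mem_erase.1 hv
      have hvM : v ∈ covered ends M := by
        by_contra hvM
        exact hvp (by simpa [hq] using Finset.mem_sdiff.2 ⟨hSV hvS, hvM⟩)
      obtain ⟨e, he, hve⟩ := mem_covered.1 hvM
      exact mem_covered.2 ⟨e, Finset.mem_filter.2 ⟨he, hS e (hM he) ⟨v, hvS, hve⟩⟩, hve⟩
    rw [hempty, Finset.card_empty] at hS'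
    lia
  · obtain ⟨he, hi⟩ := Finset.mem_filter.1 he
    exact ⟨(hΓ e (hM he)).1, fun v hv => Finset.mem_erase.2 ⟨fun hvp => hMp e he v hv hvp, hi v hv⟩⟩

namespace HasMatching

theorem of_inside_inter (h : HasMatching ends (Γ.filter (Inside ends S)) n (↑S ∩ T)) :
    HasMatching ends (Γ.filter (Inside ends S)) n T :=
  let ⟨M, hM, hMd, hMc, hMT⟩ := h
  ⟨M, hM, hMd, hMc, fun e he v hv hvT =>
    hMT e he v hv ⟨(Finset.mem_filter.1 (hM he)).2 v hv, hvT⟩⟩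

theorem biUnion {κ : Type*} {I : Finset κ} {Γ : κ → Finset ι} {n : κ → ℕ}
    (h : ∀ i ∈ I, HasMatching ends (Γ i) (n i) T)
    (hd : ∀ i j, i ≠ j → ∀ e ∈ Γ i, ∀ f ∈ Γ j, ∀ v ∈ ends e, v ∉ ends f) :
    HasMatching ends (I.biUnion Γ) (∑ i ∈ I, n i) T := by
  induction I using Finset.induction_on with
  | empty => exact zero _ _
  | insert a I ha ih =>
    rw [Finset.biUnion_insert, Finset.sum_insert ha]
    refine (h a (Finset.mem_insert_self a I)).union
      (ih fun i hi => h i (Finset.mem_insert_of_mem hi)) fun e he f hf => ?_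
    obtain ⟨i, hi, hf⟩ := Finset.mem_biUnion.1 hf
    exact hd a i (fun hai => ha (hai ▸ hi)) e he f hf

theorem add_card {N : Finset ι} (hN : N ⊆ Γ) (hNd : VertexDisjoint ends N)
    (hNT : ∀ e ∈ N, ∀ v ∈ ends e, v ∉ T) (h : HasMatching ends Γ n (T ∪ covered ends N)) :
    HasMatching ends Γ (n + N.card) T := by
  obtain ⟨M, hM, hMd, rfl, hMT⟩ := h
  have h₁ : HasMatching ends M M.card T :=
    ⟨M, subset_rfl, hMd, rfl, fun e he v hv hvT => hMT e he v hv (.inl hvT)⟩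
  refine (h₁.union ⟨N, subset_rfl, hNd, rfl, hNT⟩ fun e he f hf v hve hvf => ?_).mono
    (Finset.union_subset hM hN)
  exact hMT e he v hve (.inr (mem_covered.2 ⟨f, hf, hvf⟩))

end HasMatching

end Counting

/-! ## The Gallai–Edmonds decomposition -/

section GallaiEdmonds

variable {ι X : Type*} {ends : ι → Sym2 X} {Γ M : Finset ι} {V : Finset X} {n : ℕ}

/-- The relation of being joined by a path of edges in `Γ` with all vertices in `D`. -/
def componentSetoid (ends : ι → Sym2 X) (D : Set X) (Γ : Finset ι) : Setoid X :=
  Relation.EqvGen.setoid fun x y => x ∈ D ∧ y ∈ D ∧ ∃ e ∈ Γ, ends e = s(x, y)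

/-- The invariants of the Gallai–Edmonds decomposition of an edge set of matching number `n`: the
set `D` of vertices left uncovered by some maximum matching, this set together with its neighbours,
and the partition of `D` into connected components. Taking the neighbours with `D` makes this
monotone in the edge set. -/
def gallaiEdmonds (ends : ι → Sym2 X) (V : Finset X) (n : ℕ) (Γ : Finset ι) :
    Set X × Set X × Setoid X :=
  let D := missable ends V n Γ
  (D, D ∪ nbhd ends D Γ, componentSetoid ends D Γ)

/-- A candidate for the Gallai–Edmonds decomposition of an edge set on `V`: the set `D` split into
components and the set `A` of its neighbours. The components are encoded by a setoid on the whole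
vertex type that is trivial outside `D`. -/
structure Decomposition (V : Finset X) where
  D : Finset X
  A : Finset X
  D_subset : D ⊆ V
  A_subset : A ⊆ V
  disjoint : Disjoint D A
  comp : Setoid X
  eq_or_mem : ∀ {x y}, comp x y → x = y ∨ x ∈ D ∧ y ∈ D

namespace Decomposition

variable (𝒢 : Decomposition V)

/-- The values of `gallaiEdmonds` that `𝒢` is a candidate for. -/
def invariants : Set X × Set X × Setoid X := (𝒢.D, 𝒢.D ∪ 𝒢.A, 𝒢.comp)

/-- The component of a vertex in `D`; the value `none` is for the vertices outside `D`. -/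
noncomputable def label (x : X) : Option (Quotient 𝒢.comp) := if x ∈ 𝒢.D then some ⟦x⟧ else none

/-- The parts into which the decomposition divides `V \ A`: the components of `D`, and for `none`
the set of vertices outside `D ∪ A`. -/
noncomputable def part (i : Option (Quotient 𝒢.comp)) : Finset X :=
  (V \ 𝒢.A).filter (𝒢.label · = i)

/-- The components of `D`. -/
noncomputable def components : Finset (Quotient 𝒢.comp) := 𝒢.D.image (Quotient.mk 𝒢.comp)

/-- The edges with the components of `D` contracted to points. -/
def contract (ends : ι → Sym2 X) (e : ι) : Sym2 (Quotient 𝒢.comp) :=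
  (ends e).map (Quotient.mk 𝒢.comp)

/-- The edge is compatible with the decomposition: it has an end point in `A` or lies inside a
part. -/
def IsGood (ends : ι → Sym2 X) (e : ι) : Prop :=
  Touches ends 𝒢.A e ∨ ∃ i ∈ 𝒢.components.insertNone, Inside ends (𝒢.part i) e

/-- The label of the end points of an edge inside a part. -/
noncomputable def edgeLabel (ends : ι → Sym2 X) (e : ι) : Option (Quotient 𝒢.comp) :=
  𝒢.label (ends e).out.1

/-- The matching number of an edge set with Gallai–Edmonds decomposition `𝒢`. -/
noncomputable def size : ℕ :=
  𝒢.A.card + ∑ i ∈ 𝒢.components.insertNone, (𝒢.part i).card / 2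

/-- The parities of the parts in a Gallai–Edmonds decomposition. -/
structure IsBalanced : Prop where
  even : Even (𝒢.part none).card
  odd : ∀ i ∈ 𝒢.components, Odd (𝒢.part (some i)).card

/-- The edge sets with Gallai–Edmonds decomposition `𝒢`: inside the components they are
factor-critical and outside `D ∪ A` they have a perfect matching, both of which `avoidingSets`
expresses; and they match `A` into the components of `D` with surplus. -/
def sets (ends : ι → Sym2 X) : Set (Finset ι) :=
  {Γ | (∀ e ∈ Γ, 𝒢.IsGood ends e) ∧
    (∀ i ∈ 𝒢.components.insertNone, Γ.filter (Inside ends (𝒢.part i)) ∈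
      avoidingSets ends (𝒢.part i ∩ 𝒢.D) ((𝒢.part i).card / 2)) ∧
    Γ.filter (fun e => Touches ends 𝒢.A e ∧ Touches ends 𝒢.D e) ∈
      avoidingSets (𝒢.contract ends) (Quotient.mk 𝒢.comp '' 𝒢.D) 𝒢.A.card}

variable {𝒢}

theorem notMem_A {x : X} (hx : x ∈ 𝒢.D) : x ∉ 𝒢.A := Finset.disjoint_left.1 𝒢.disjoint hx

theorem mem_part {x : X} {i : Option (Quotient 𝒢.comp)} :
    x ∈ 𝒢.part i ↔ x ∈ V ∧ x ∉ 𝒢.A ∧ 𝒢.label x = i := by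
  simp [part, and_assoc]

theorem mem_part_none {x : X} : x ∈ 𝒢.part none ↔ x ∈ V ∧ x ∉ 𝒢.A ∧ x ∉ 𝒢.D := by
  simp [mem_part, label]

theorem mem_part_some {x : X} {q : Quotient 𝒢.comp} :
    x ∈ 𝒢.part (some q) ↔ x ∈ 𝒢.D ∧ Quotient.mk 𝒢.comp x = q := by
  by_cases hx : x ∈ 𝒢.D
  · simp [mem_part, label, hx, notMem_A, 𝒢.D_subset hx]
  · simp [mem_part, label, hx]

theorem mk_eq_mk {x y : X} :
    Quotient.mk 𝒢.comp x = Quotient.mk 𝒢.comp y ↔ 𝒢.comp x y := Quotient.eq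

theorem rel_of_mem_part {x y : X} {i : Option (Quotient 𝒢.comp)} (hx : x ∈ 𝒢.part i)
    (hy : y ∈ 𝒢.part i) (hxD : x ∈ 𝒢.D) : 𝒢.comp x y ∧ y ∈ 𝒢.D := by
  cases i with
  | none => exact absurd hxD (mem_part_none.1 hx).2.2
  | some q =>
    rw [mem_part_some] at hx hy
    exact ⟨mk_eq_mk.1 (hx.2.trans hy.2.symm), hy.1⟩

theorem IsGood.inside_iff {e : ι} (he : 𝒢.IsGood ends e) {i : Option (Quotient 𝒢.comp)} :
    Inside ends (𝒢.part i) e ↔ ¬ Touches ends 𝒢.A e ∧ 𝒢.edgeLabel ends e = i := by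
  have hlabel {j : Option (Quotient 𝒢.comp)} (hj : Inside ends (𝒢.part j) e) :
      ¬ Touches ends 𝒢.A e ∧ 𝒢.edgeLabel ends e = j :=
    ⟨fun ⟨v, hv, hve⟩ => (mem_part.1 (hj v hve)).2.1 hv,
      (mem_part.1 (hj _ (Sym2.out_fst_mem (ends e)))).2.2⟩
  refine ⟨hlabel, fun ⟨hA, hi⟩ => ?_⟩
  obtain ⟨j, -, hj⟩ := he.resolve_left hA
  exact hi ▸ (hlabel hj).2 ▸ hj

theorem IsGood.edgeLabel_mem {e : ι} (he : 𝒢.IsGood ends e) (hA : ¬ Touches ends 𝒢.A e) :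
    𝒢.edgeLabel ends e ∈ 𝒢.components.insertNone := by
  obtain ⟨j, hj, hje⟩ := Or.resolve_left he hA
  exact (he.inside_iff.1 hje).2 ▸ hj

theorem IsGood.inside_of_mem {e : ι} (he : 𝒢.IsGood ends e) (hA : ¬ Touches ends 𝒢.A e) {x : X}
    (hx : x ∈ ends e) {i : Option (Quotient 𝒢.comp)} (hi : x ∈ 𝒢.part i) :
    Inside ends (𝒢.part i) e := by
  obtain ⟨j, -, hj⟩ := he.resolve_left hA
  rwa [← (mem_part.1 hi).2.2, (mem_part.1 (hj x hx)).2.2]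

theorem card_eq_sum (hM : ∀ e ∈ M, 𝒢.IsGood ends e) :
    M.card = (M.filter (Touches ends 𝒢.A)).card +
      ∑ i ∈ 𝒢.components.insertNone, (M.filter (Inside ends (𝒢.part i))).card := by
  rw [← Finset.card_filter_add_card_filter_not (s := M) (Touches ends 𝒢.A),
    Finset.card_eq_sum_card_fiberwise (f := 𝒢.edgeLabel ends) fun e he =>
      (hM e (Finset.mem_filter.1 he).1).edgeLabel_mem (Finset.mem_filter.1 he).2]
  congr! 3 with i
  rw [Finset.filter_filter]
  exact Finset.filter_congr fun e he => (hM e he).inside_iff.symm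

theorem isLooplessOn_filter_inside (hM : IsLooplessOn ends V M) (S : Finset X) :
    IsLooplessOn ends S (M.filter (Inside ends S)) := fun e he =>
  ⟨(hM e (Finset.mem_filter.1 he).1).1, (Finset.mem_filter.1 he).2⟩

end Decomposition

end GallaiEdmonds

section DecompositionSets

variable {ι X : Type*} {ends : ι → Sym2 X} {Γ M N : Finset ι} {V : Finset X} {T : Set X} {n : ℕ}
  {𝒢 : Decomposition V}

namespace Decomposition

theorem mk_mem_contract {e : ι} {x : X} (hx : x ∈ ends e) :
    Quotient.mk 𝒢.comp x ∈ 𝒢.contract ends e :=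
  Sym2.mem_map.2 ⟨x, hx, rfl⟩

theorem vertexDisjoint_of_contract (hN : VertexDisjoint (𝒢.contract ends) N) :
    VertexDisjoint ends N :=
  fun _ he _ hf _ hve hvf => hN he hf (mk_mem_contract hve) (mk_mem_contract hvf)

theorem mem_A_of_touches {e : ι} {x y : X} (hx : x ∈ ends e) (hy : y ∈ ends e) (hxy : x ≠ y)
    (hxA : x ∉ 𝒢.A) (hA : Touches ends 𝒢.A e) : y ∈ 𝒢.A := by
  obtain ⟨a, ha, hae⟩ := hA
  rw [(Sym2.mem_and_mem_iff hxy).1 ⟨hx, hy⟩, Sym2.mem_iff] at hae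
  exact (hae.resolve_left fun hax => hxA (hax ▸ ha)) ▸ ha

theorem subsingleton_part_inter_covered (hT : T.Subsingleton)
    (hN : ∀ e ∈ N, Touches ends 𝒢.A e) (hNd : VertexDisjoint (𝒢.contract ends) N)
    (hNT : ∀ e ∈ N, ∀ q ∈ 𝒢.contract ends e, q ∉ Quotient.mk 𝒢.comp '' T)
    (i : Option (Quotient 𝒢.comp)) :
    (↑(𝒢.part i) ∩ ↑𝒢.D ∩ (T ∪ covered ends N)).Subsingleton := by
  rintro x ⟨⟨hxi, hxD⟩, hx⟩ y ⟨⟨hyi, hyD⟩, hy⟩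
  have hxy : Quotient.mk 𝒢.comp x = Quotient.mk 𝒢.comp y :=
    mk_eq_mk.2 (rel_of_mem_part hxi hyi hxD).1
  rw [Set.mem_union, Finset.mem_coe, mem_covered] at hx hy
  rcases hx with hx | ⟨e, he, hxe⟩ <;> rcases hy with hy | ⟨f, hf, hyf⟩
  · exact hT hx hy
  · exact absurd ⟨x, hx, hxy⟩ (hNT f hf _ (mk_mem_contract hyf))
  · exact absurd ⟨y, hy, hxy.symm⟩ (hNT e he _ (mk_mem_contract hxe))
  · obtain rfl := hNd he hf (mk_mem_contract hxe) (hxy ▸ mk_mem_contract hyf)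
    by_contra hne
    exact notMem_A hyD (mem_A_of_touches hxe hyf hne (notMem_A hxD) (hN e he))

theorem mem_D_of_mem_covered (hN : ∀ e ∈ N, Touches ends 𝒢.A e ∧ Touches ends 𝒢.D e) {x : X}
    (hx : x ∈ covered ends N) (hxA : x ∉ 𝒢.A) : x ∈ 𝒢.D := by
  obtain ⟨e, he, hxe⟩ := mem_covered.1 hx
  obtain ⟨d, hd, hde⟩ := (hN e he).2
  by_contra hxD
  exact notMem_A hd (mem_A_of_touches hxe hde (fun h => hxD (h ▸ hd)) hxA (hN e he).1)

theorem hasMatching_of_mem_sets (hΓ : Γ ∈ 𝒢.sets ends)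
    (hTD : T ⊆ 𝒢.D) (hT : T.Subsingleton) : HasMatching ends Γ 𝒢.size T := by
  have of_subsingleton {ι' X' : Type _} {ends' : ι' → Sym2 X'} {Γ' : Finset ι'} {B T' : Set X'}
      {n : ℕ} (h : Γ' ∈ avoidingSets ends' B n) (hB : T' ⊆ B) (hT' : T'.Subsingleton) :
      HasMatching ends' Γ' n T' := by
    rcases hT'.eq_empty_or_singleton with rfl | ⟨p, rfl⟩
    exacts [h.1, h.2 p (hB rfl)]
  obtain ⟨-, hpart, hA⟩ := hΓ
  obtain ⟨N, hN, hNd, hNc, hNT⟩ := of_subsingleton hA (Set.image_mono hTD) (hT.image _)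
  have hN' (e : ι) (he : e ∈ N) := Finset.mem_filter.1 (hN he)
  have hparts : HasMatching ends Γ (∑ i ∈ 𝒢.components.insertNone, (𝒢.part i).card / 2)
      (T ∪ covered ends N) := by
    refine (HasMatching.biUnion (fun i hi => HasMatching.of_inside_inter ?_)
      fun i j hij e he f hf v hve hvf => hij ?_).mono
      (Finset.biUnion_subset.2 fun i _ => Finset.filter_subset (Inside ends (𝒢.part i)) Γ)
    · have hD : (𝒢.part i : Set X) ∩ (T ∪ covered ends N) =
          ↑(𝒢.part i) ∩ ↑𝒢.D ∩ (T ∪ covered ends N) := by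
        refine Set.Subset.antisymm (fun x hx => ⟨⟨hx.1, ?_⟩, hx.2⟩) fun x hx => ⟨hx.1.1, hx.2⟩
        exact hx.2.elim (@hTD x) fun h =>
          mem_D_of_mem_covered (fun e he => (hN' e he).2) h (mem_part.1 hx.1).2.1
      rw [hD]
      exact of_subsingleton (hpart i hi) Set.inter_subset_left
        (subsingleton_part_inter_covered hT (fun e he => (hN' e he).2.1) hNd hNT i)
    · have hi := (mem_part.1 ((Finset.mem_filter.1 he).2 v hve)).2.2
      exact hi.symm.trans (mem_part.1 ((Finset.mem_filter.1 hf).2 v hvf)).2.2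
  have hall := hparts.add_card (fun e he => (hN' e he).1) (vertexDisjoint_of_contract hNd)
    fun e he v hve hvT => hNT e he _ (mk_mem_contract hve) ⟨v, hvT, rfl⟩
  rwa [hNc, add_comm] at hall

theorem le_of_hasMatching (hl : IsLooplessOn ends V Γ) (hg : ∀ e ∈ Γ, 𝒢.IsGood ends e)
    {T : Finset X} (h : HasMatching ends Γ n T) :
    n ≤ (𝒢.A \ T).card + ∑ i ∈ 𝒢.components.insertNone, (𝒢.part i \ T).card / 2 := by
  obtain ⟨M, hM, hMd, rfl, hMT⟩ := h
  rw [card_eq_sum fun e he => hg e (hM he)]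
  refine add_le_add ?_ (Finset.sum_le_sum fun i _ => ?_)
  · refine (hMd.subset (Finset.filter_subset _ M)).card_le_card _ fun e he => ?_
    obtain ⟨he, v, hv, hve⟩ := Finset.mem_filter.1 he
    exact ⟨v, by simpa using ⟨hv, hMT e he v hve⟩, hve⟩
  · have := (hMd.subset (Finset.filter_subset (Inside ends (𝒢.part i)) M)).two_mul_card_le
      (isLooplessOn_filter_inside (hl.subset hM) _) (T := T)
      fun e he => hMT e (Finset.mem_filter.1 he).1
    lia

theorem not_hasMatching_size_succ (hl : IsLooplessOn ends V Γ) (hg : ∀ e ∈ Γ, 𝒢.IsGood ends e) :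
    ¬ HasMatching ends Γ (𝒢.size + 1) ∅ := fun h => by
  have := le_of_hasMatching hl hg (T := ∅) (by simpa using h)
  simp only [Finset.sdiff_empty, size] at this
  lia

theorem not_hasMatching_size (hl : IsLooplessOn ends V Γ) (hg : ∀ e ∈ Γ, 𝒢.IsGood ends e)
    (heven : Even (𝒢.part none).card) {v : X} (hv : v ∈ V) (hvD : v ∉ 𝒢.D) :
    ¬ HasMatching ends Γ 𝒢.size {v} := fun h => by
  have hle := le_of_hasMatching hl hg (T := {v}) (by simpa using h)
  have hpart (i : Option (Quotient 𝒢.comp)) :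
      (𝒢.part i \ {v}).card / 2 ≤ (𝒢.part i).card / 2 :=
    Nat.div_le_div_right (Finset.card_le_card Finset.sdiff_subset)
  rw [size] at hle
  by_cases hvA : v ∈ 𝒢.A
  · have hA := Finset.card_lt_card (Finset.sdiff_ssubset (Finset.singleton_subset_iff.2 hvA)
      (Finset.singleton_nonempty v))
    have := Finset.sum_le_sum fun i (_ : i ∈ 𝒢.components.insertNone) => hpart i
    lia
  · have hC := Finset.card_sdiff_add_card_eq_card
      (Finset.singleton_subset_iff.2 (mem_part_none.2 ⟨hv, hvA, hvD⟩))
    have hlt := Finset.sum_lt_sum (s := 𝒢.components.insertNone) (fun i _ => hpart i)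
      ⟨none, Finset.none_mem_insertNone, by grind⟩
    have := Finset.card_le_card (Finset.sdiff_subset (s := 𝒢.A) (t := {v}))
    lia

theorem missable_size (hl : IsLooplessOn ends V Γ) (hΓ : Γ ∈ 𝒢.sets ends)
    (heven : Even (𝒢.part none).card) : missable ends V 𝒢.size Γ = 𝒢.D := by
  ext v
  constructor
  · rintro ⟨hv, h⟩
    by_contra hvD
    exact not_hasMatching_size hl hΓ.1 heven hv hvD h
  · exact fun hv => ⟨𝒢.D_subset hv, hasMatching_of_mem_sets hΓ
      (Set.singleton_subset_iff.2 hv) Set.subsingleton_singleton⟩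

theorem union_nbhd_eq (hΓ : Γ ∈ 𝒢.sets ends) :
    (𝒢.D : Set X) ∪ nbhd ends 𝒢.D Γ = ↑𝒢.D ∪ ↑𝒢.A := by
  obtain ⟨hg, -, ⟨N, hN, hNd, hNc, -⟩, -⟩ := hΓ
  refine Set.Subset.antisymm (Set.union_subset Set.subset_union_left ?_)
    (Set.union_subset Set.subset_union_left fun a ha => .inr ?_)
  · rintro j ⟨e, he, p, hp, hjp⟩
    rcases hg e he with hA | ⟨i, -, hi⟩
    · exact .inr (((touches_iff_of_eq_mk hjp).1 hA).resolve_right (notMem_A hp))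
    · exact .inl (rel_of_mem_part (hi p (by simp [hjp])) (hi j (by simp [hjp])) hp).2
  · have hN' (e : ι) (he : e ∈ N) := Finset.mem_filter.1 (hN he)
    obtain ⟨e, he, hae⟩ : ∃ e ∈ N, a ∈ ends e := by
      by_contra! haN
      exact ((vertexDisjoint_of_contract hNd).card_lt_card_of_notMem 𝒢.A
        (fun e he => (hN' e he).2.1) ha haN).ne hNc
    obtain ⟨hΓ, -, d, hd, hde⟩ := hN' e he
    have had : a ≠ d := fun h => notMem_A hd (h ▸ ha)
    exact ⟨e, hΓ, d, hd, (Sym2.mem_and_mem_iff had).1 ⟨hae, hde⟩⟩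

theorem componentSetoid_eq (hl : IsLooplessOn ends V Γ) (hΓ : Γ ∈ 𝒢.sets ends)
    (hodd : ∀ i ∈ 𝒢.components, Odd (𝒢.part (some i)).card) :
    componentSetoid ends 𝒢.D Γ = 𝒢.comp := by
  refine le_antisymm (Setoid.eqvGen_le ?_) fun x y hxy => ?_
  · rintro x y ⟨hx, hy, e, he, hxy⟩
    obtain ⟨i, -, hi⟩ := (hΓ.1 e he).resolve_left fun h =>
      ((touches_iff_of_eq_mk hxy).1 h).elim (notMem_A hx) (notMem_A hy)
    exact (rel_of_mem_part (hi x (by simp [hxy])) (hi y (by simp [hxy])) hx).1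
  rcases 𝒢.eq_or_mem hxy with rfl | ⟨hx, hy⟩
  · exact Setoid.refl' _ x
  set q := Quotient.mk 𝒢.comp x
  have hq : q ∈ 𝒢.components := Finset.mem_image_of_mem _ hx
  have hxq : x ∈ 𝒢.part (some q) := mem_part_some.2 ⟨hx, rfl⟩
  have hyq : y ∈ 𝒢.part (some q) := mem_part_some.2 ⟨hy, (mk_eq_mk.2 hxy).symm⟩
  set S := (𝒢.part (some q)).filter (componentSetoid ends 𝒢.D Γ x)
  have hS (e) (he : e ∈ Γ.filter (Inside ends (𝒢.part (some q)))) (h : Touches ends S e) :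
      Inside ends S e := fun w hw => by
    obtain ⟨he, hi⟩ := Finset.mem_filter.1 he
    obtain ⟨v, hv, hve⟩ := h
    obtain ⟨hvq, hxv⟩ := Finset.mem_filter.1 hv
    rcases eq_or_ne v w with rfl | hvw
    · exact hv
    · exact Finset.mem_filter.2 ⟨hi w hw, Setoid.trans' _ hxv <| .rel _ _ ⟨(mem_part_some.1 hvq).1,
        (mem_part_some.1 (hi w hw)).1, e, he, (Sym2.mem_and_mem_iff hvw).1 ⟨hve, hw⟩⟩⟩
  have heven {p : X} (hp : p ∈ 𝒢.part (some q)) : Even (S.erase p).card :=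
    HasMatching.even_card_erase (isLooplessOn_filter_inside hl _)
      (Nat.two_mul_div_two_add_one_of_odd (hodd q hq)).symm (Finset.filter_subset _ _) hS hp
      ((hΓ.2.1 _ (Finset.some_mem_insertNone.2 hq)).2 p ⟨hp, (mem_part_some.1 hp).1⟩)
  by_contra hxy'
  have hxS : x ∈ S := Finset.mem_filter.2 ⟨hxq, Setoid.refl' _ x⟩
  have hyS : y ∉ S := fun h => hxy' (Finset.mem_filter.1 h).2
  have h₁ := Finset.card_erase_add_one hxS
  have h₂ := heven hyq
  rw [Finset.erase_eq_of_notMem hyS, ← h₁, Nat.even_add_one] at h₂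
  exact h₂ (heven hxq)

theorem levelSets_and_gallaiEdmonds_eq (hl : IsLooplessOn ends V Γ) (hb : 𝒢.IsBalanced)
    (hΓ : Γ ∈ 𝒢.sets ends) :
    Γ ∈ levelSets ends 𝒢.size ∧ gallaiEdmonds ends V 𝒢.size Γ = 𝒢.invariants := by
  refine ⟨⟨hasMatching_of_mem_sets hΓ (Set.empty_subset _) Set.subsingleton_empty,
    not_hasMatching_size_succ hl hΓ.1⟩, ?_⟩
  rw [gallaiEdmonds, missable_size hl hΓ hb.even, union_nbhd_eq hΓ,
    componentSetoid_eq hl hΓ hb.odd, invariants]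

end Decomposition

end DecompositionSets

section GallaiEdmondsTheorem

variable {ι X : Type*} {ends : ι → Sym2 X} {Γ M : Finset ι} {V : Finset X} {T : Set X} {m n r : ℕ}
  {𝒢 : Decomposition V}

theorem monotone_gallaiEdmonds : Monotone (gallaiEdmonds ends V n) := fun _ _ hΓ =>
  have hD := missable_mono hΓ
  ⟨hD, Set.union_subset_union hD (nbhd_mono hD hΓ), Setoid.eqvGen_mono
    fun _ _ ⟨hx, hy, e, he, hxy⟩ => ⟨hD hx, hD hy, e, hΓ he, hxy⟩⟩

theorem eq_or_mem_of_componentSetoid {D : Set X} {x y : X} (h : componentSetoid ends D Γ x y) :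
    x = y ∨ x ∈ D ∧ y ∈ D := by
  let R : Setoid X :=
    { r x y := x = y ∨ x ∈ D ∧ y ∈ D
      iseqv := ⟨fun _ => .inl rfl, by grind, by grind⟩ }
  exact (Setoid.eqvGen_le fun x y h => .inr ⟨h.1, h.2.1⟩ : componentSetoid ends D Γ ≤ R) h

/-- Gallai's lemma. -/
theorem not_hasMatching_of_componentSetoid {D : Set X} (hmax : ¬ HasMatching ends Γ (n + 1) T)
    (hD : ∀ x ∈ D, x ∉ T ∧ HasMatching ends Γ n (insert x T)) {x y : X}
    (hxy : componentSetoid ends D Γ x y) (hne : x ≠ y) :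
    ¬ HasMatching ends Γ n (insert x (insert y T)) := by
  let R : Setoid X :=
    { r x y := x = y ∨ x ∈ D ∧ y ∈ D ∧ ¬ HasMatching ends Γ n (insert x (insert y T))
      iseqv :=
        { refl x := .inl rfl
          symm h := h.imp Eq.symm fun ⟨hx, hy, h⟩ => ⟨hy, hx, by rwa [Set.insert_comm]⟩
          trans := by
            rintro x y z (rfl | ⟨hx, hy, hxy⟩) (rfl | ⟨hy', hz, hyz⟩)
            · exact .inl rfl
            · exact .inr ⟨hy', hz, hyz⟩
            · exact .inr ⟨hx, hy, hxy⟩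
            refine or_iff_not_imp_left.2 fun hxz => ⟨hx, hz, fun h => ?_⟩
            rcases HasMatching.gallai_exchange hxz hmax h (hD y hy).2 with h | h
            · exact hxy (by rwa [Set.insert_comm])
            · exact hyz h } }
  have hR : componentSetoid ends D Γ ≤ R := Setoid.eqvGen_le fun x y ⟨hx, hy, e, he, hxy⟩ =>
    .inr ⟨hx, hy, fun h => hmax (h.add_edge he hxy subset_rfl (hD x hx).1 (hD y hy).1)⟩
  exact ((hR hxy).resolve_left hne).2.2

namespace Decomposition

theorem exists_gallaiEdmonds_eq (hl : IsLooplessOn ends V Γ) :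
    ∃ 𝒢 : Decomposition V, gallaiEdmonds ends V m Γ = 𝒢.invariants := by
  obtain ⟨D, hDV, hD⟩ : ∃ D : Finset X, D ⊆ V ∧ missable ends V m Γ = D := by
    obtain ⟨D, hD⟩ := (V.finite_toSet.subset fun v hv => hv.1 :
      (missable ends V m Γ).Finite).exists_finset_coe
    exact ⟨D, fun v hv => (hD.le hv).1, hD.symm⟩
  set A := V.filter (fun a => a ∈ nbhd ends D Γ ∧ a ∉ D)
  have hA : (D : Set X) ∪ nbhd ends D Γ = ↑D ∪ ↑A := by
    ext v
    have hV : v ∈ nbhd ends D Γ → v ∈ V := fun ⟨e, he, p, _, hvp⟩ =>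
      (hl e he).2 v (hvp ▸ Sym2.mem_mk_left v p)
    simp only [A, Set.mem_union, Finset.mem_coe, Finset.mem_filter]
    tauto
  refine ⟨⟨D, A, hDV, Finset.filter_subset _ _, Finset.disjoint_right.2 fun a ha =>
    (Finset.mem_filter.1 ha).2.2, componentSetoid ends D Γ, eq_or_mem_of_componentSetoid⟩, ?_⟩
  rw [gallaiEdmonds, hD, hA, invariants]

theorem isGood_of_gallaiEdmonds_eq (hl : IsLooplessOn ends V Γ)
    (h𝒢 : gallaiEdmonds ends V m Γ = 𝒢.invariants) {e : ι} (he : e ∈ Γ) : 𝒢.IsGood ends e := by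
  simp only [gallaiEdmonds, invariants, Prod.mk.injEq] at h𝒢
  obtain ⟨hD, hA, hcomp⟩ := h𝒢
  rw [hD] at hA hcomp
  refine or_iff_not_imp_left.2 fun hAe => ?_
  by_cases hDe : Touches ends 𝒢.D e
  · obtain ⟨x, hx, hxe⟩ := hDe
    obtain ⟨y, hxy⟩ := Sym2.mem_iff_exists.1 hxe
    have hy : y ∈ 𝒢.D := (hA.le (.inr ⟨e, he, x, hx, by rw [hxy, Sym2.eq_swap]⟩)).resolve_right
      fun hyA => hAe ⟨y, hyA, by simp [hxy]⟩
    have hcxy : 𝒢.comp x y := hcomp ▸ .rel _ _ ⟨hx, hy, e, he, hxy⟩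
    refine ⟨some ⟦x⟧, Finset.some_mem_insertNone.2 (Finset.mem_image_of_mem _ hx), fun v hv => ?_⟩
    rw [hxy, Sym2.mem_iff] at hv
    rcases hv with rfl | rfl
    · exact mem_part_some.2 ⟨hx, rfl⟩
    · exact mem_part_some.2 ⟨hy, (mk_eq_mk.2 hcxy).symm⟩
  · exact ⟨none, Finset.none_mem_insertNone, fun v hv => mem_part_none.2
      ⟨(hl e he).2 v hv, fun h => hAe ⟨v, h, hv⟩, fun h => hDe ⟨v, h, hv⟩⟩⟩

variable (𝒢) in
/-- The properties of an edge set with Gallai–Edmonds decomposition `𝒢` that remain to be exploited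
once the matching number `r` of the edges avoiding `A` is known: `D` is also the set of vertices
outside `A` that some maximum matching of those edges misses. -/
structure IsStable (ends : ι → Sym2 X) (Γ : Finset ι) (r : ℕ) : Prop where
  isGood : ∀ e ∈ Γ, 𝒢.IsGood ends e
  comp_eq : componentSetoid ends 𝒢.D Γ = 𝒢.comp
  hasMatching : HasMatching ends Γ r 𝒢.A
  not_hasMatching_succ : ¬ HasMatching ends Γ (r + 1) 𝒢.A
  hasMatching_insert_iff : ∀ x ∈ V, x ∉ 𝒢.A → (HasMatching ends Γ r (insert x 𝒢.A) ↔ x ∈ 𝒢.D)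

theorem exists_isStable (hl : IsLooplessOn ends V Γ) (hΓ : Γ ∈ levelSets ends m)
    (h𝒢 : gallaiEdmonds ends V m Γ = 𝒢.invariants) :
    ∃ r, r + 𝒢.A.card = m ∧ 𝒢.IsStable ends Γ r := by
  have hg (e : ι) (he : e ∈ Γ) := isGood_of_gallaiEdmonds_eq hl h𝒢 he
  simp only [gallaiEdmonds, invariants, Prod.mk.injEq] at h𝒢
  obtain ⟨hD, hA, hcomp⟩ := h𝒢
  rw [hD] at hA hcomp
  have hiff {x : X} (hx : x ∈ V) : HasMatching ends Γ m {x} ↔ x ∈ 𝒢.D := by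
    rw [← Finset.mem_coe, ← hD]
    exact (and_iff_right hx).symm
  obtain ⟨r, hr, h₁, h₂, h₃⟩ := HasMatching.stability_finset hΓ.1 hΓ.2 𝒢.A fun a ha => by
    have haD : a ∉ 𝒢.D := fun h => notMem_A h ha
    obtain ⟨e, he, d, hd, had⟩ := (hA.ge (.inr ha)).resolve_left haD
    exact ⟨mt (hiff (𝒢.A_subset ha)).1 haD, e, he, d, had, (hiff (𝒢.D_subset hd)).2 hd⟩
  exact ⟨r, hr, hg, hcomp, h₁, h₂, fun x hx hxA => (h₃ x hxA).trans (hiff hx)⟩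

theorem sdiff_covered_filter_inside (hg : ∀ e ∈ M, 𝒢.IsGood ends e)
    (hA : ∀ e ∈ M, ∀ v ∈ ends e, v ∉ 𝒢.A) (i : Option (Quotient 𝒢.comp)) :
    𝒢.part i \ covered ends (M.filter (Inside ends (𝒢.part i))) = 𝒢.part i \ covered ends M := by
  ext v
  simp only [Finset.mem_sdiff, mem_covered, and_congr_right_iff, not_iff_not]
  refine fun hv => ⟨fun ⟨e, he, hve⟩ => ⟨e, (Finset.mem_filter.1 he).1, hve⟩,
    fun ⟨e, he, hve⟩ => ⟨e, Finset.mem_filter.2 ⟨he, ?_⟩, hve⟩⟩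
  exact (hg e he).inside_of_mem (fun ⟨a, ha, hae⟩ => hA e he a hae ha) hve hv

namespace IsStable

theorem sdiff_covered_none (h : 𝒢.IsStable ends Γ r) (hM : M ⊆ Γ) (hMd : VertexDisjoint ends M)
    (hr : M.card = r) (hA : ∀ e ∈ M, ∀ v ∈ ends e, v ∉ 𝒢.A) :
    𝒢.part none \ covered ends M = ∅ := by
  refine Finset.sdiff_eq_empty_iff_subset.2 fun x hx => not_not.1 fun hxM => ?_
  obtain ⟨hxV, hxA, hxD⟩ := mem_part_none.1 hx
  refine hxD ((h.hasMatching_insert_iff x hxV hxA).1 ⟨M, hM, hMd, hr, fun e he v hv => ?_⟩)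
  rintro (rfl | hvA)
  exacts [hxM (mem_covered.2 ⟨e, he, hv⟩), hA e he v hv hvA]

theorem card_sdiff_covered_le_one (h : 𝒢.IsStable ends Γ r) (hM : M ⊆ Γ)
    (hMd : VertexDisjoint ends M) (hr : M.card = r) (hA : ∀ e ∈ M, ∀ v ∈ ends e, v ∉ 𝒢.A)
    (i : Option (Quotient 𝒢.comp)) : (𝒢.part i \ covered ends M).card ≤ 1 := by
  cases i with
  | none => simp [h.sdiff_covered_none hM hMd hr hA]
  | some q =>
    refine Finset.card_le_one.2 fun x hx y hy => by_contra fun hxy => ?_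
    obtain ⟨hx, hxM⟩ := Finset.mem_sdiff.1 hx
    obtain ⟨hy, hyM⟩ := Finset.mem_sdiff.1 hy
    have hcomp := (rel_of_mem_part hx hy (mem_part_some.1 hx).1).1
    refine not_hasMatching_of_componentSetoid h.not_hasMatching_succ (fun x hx =>
      ⟨notMem_A hx, (h.hasMatching_insert_iff x (𝒢.D_subset hx) (notMem_A hx)).2 hx⟩)
      (h.comp_eq ▸ hcomp) hxy ⟨M, hM, hMd, hr, fun e he v hv => ?_⟩
    rintro (rfl | rfl | hvA)
    exacts [hxM (mem_covered.2 ⟨e, he, hv⟩), hyM (mem_covered.2 ⟨e, he, hv⟩), hA e he v hv hvA]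

theorem two_mul_card_add (h : 𝒢.IsStable ends Γ r) (hl : IsLooplessOn ends V Γ) (hM : M ⊆ Γ)
    (hMd : VertexDisjoint ends M) (hA : ∀ e ∈ M, ∀ v ∈ ends e, v ∉ 𝒢.A)
    (i : Option (Quotient 𝒢.comp)) :
    2 * (M.filter (Inside ends (𝒢.part i))).card + (𝒢.part i \ covered ends M).card =
      (𝒢.part i).card := by
  rw [← sdiff_covered_filter_inside (fun e he => h.isGood e (hM he)) hA]
  exact (hMd.subset (Finset.filter_subset _ _)).two_mul_card_add_card_sdiff
    (isLooplessOn_filter_inside (hl.subset hM) _)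

theorem isBalanced (h : 𝒢.IsStable ends Γ r) (hl : IsLooplessOn ends V Γ) : 𝒢.IsBalanced where
  even := by
    obtain ⟨M, hM, hMd, hr, hA⟩ := h.hasMatching
    have hcard := h.two_mul_card_add hl hM hMd hA none
    rw [h.sdiff_covered_none hM hMd hr hA, Finset.card_empty, add_zero] at hcard
    exact hcard ▸ even_two_mul _
  odd q hq := by
    obtain ⟨p, hp, rfl⟩ := Finset.mem_image.1 hq
    obtain ⟨M, hM, hMd, hr, hpA⟩ :=
      (h.hasMatching_insert_iff p (𝒢.D_subset hp) (notMem_A hp)).2 hp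
    have hA (e : ι) (he : e ∈ M) (v : X) (hv : v ∈ ends e) : v ∉ 𝒢.A :=
      fun h => hpA e he v hv (.inr h)
    have hpM : p ∈ 𝒢.part (some ⟦p⟧) \ covered ends M := Finset.mem_sdiff.2
      ⟨mem_part_some.2 ⟨hp, rfl⟩, fun h =>
        let ⟨e, he, hpe⟩ := mem_covered.1 h
        hpA e he p hpe (.inl rfl)⟩
    have hpos := Finset.card_pos.2 ⟨p, hpM⟩
    have hle := h.card_sdiff_covered_le_one hM hMd hr hA (some ⟦p⟧)
    exact ⟨_, by rw [← h.two_mul_card_add hl hM hMd hA (some ⟦p⟧), le_antisymm hle hpos]⟩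

theorem card_filter_inside (h : 𝒢.IsStable ends Γ r) (hl : IsLooplessOn ends V Γ) (hM : M ⊆ Γ)
    (hMd : VertexDisjoint ends M) (hr : M.card = r) (hA : ∀ e ∈ M, ∀ v ∈ ends e, v ∉ 𝒢.A)
    (i : Option (Quotient 𝒢.comp)) :
    (M.filter (Inside ends (𝒢.part i))).card = (𝒢.part i).card / 2 := by
  have := h.two_mul_card_add hl hM hMd hA i
  have := h.card_sdiff_covered_le_one hM hMd hr hA i
  lia

theorem card_A_add_eq_size (h : 𝒢.IsStable ends Γ r) (hl : IsLooplessOn ends V Γ) :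
    r + 𝒢.A.card = 𝒢.size := by
  obtain ⟨M, hM, hMd, hr, hA⟩ := h.hasMatching
  have hsum := card_eq_sum fun e he => h.isGood e (hM he)
  simp only [h.card_filter_inside hl hM hMd hr hA] at hsum
  rw [Finset.filter_eq_empty_iff.2 fun e he ⟨a, ha, hae⟩ => hA e he a hae ha, Finset.card_empty,
    zero_add, hr] at hsum
  rw [size, hsum, add_comm]

theorem hasMatching_inside (h : 𝒢.IsStable ends Γ r) (hl : IsLooplessOn ends V Γ)
    (hAT : ↑𝒢.A ⊆ T) (hT : HasMatching ends Γ r T) (i : Option (Quotient 𝒢.comp)) :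
    HasMatching ends (Γ.filter (Inside ends (𝒢.part i))) ((𝒢.part i).card / 2) T := by
  obtain ⟨M, hM, hMd, hr, hMT⟩ := hT
  exact ⟨M.filter (Inside ends (𝒢.part i)), Finset.filter_subset_filter _ hM,
    hMd.subset (Finset.filter_subset _ _),
    h.card_filter_inside hl hM hMd hr (fun e he v hv hvA => hMT e he v hv (hAT hvA)) i,
    fun e he => hMT e (Finset.mem_filter.1 he).1⟩

theorem filter_inside_mem_avoidingSets (h : 𝒢.IsStable ends Γ r) (hl : IsLooplessOn ends V Γ)
    (i : Option (Quotient 𝒢.comp)) : Γ.filter (Inside ends (𝒢.part i)) ∈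
      avoidingSets ends (𝒢.part i ∩ 𝒢.D) ((𝒢.part i).card / 2) := by
  refine ⟨(h.hasMatching_inside hl subset_rfl h.hasMatching i).anti (Set.empty_subset _),
    fun p ⟨_, hp⟩ => ?_⟩
  exact (h.hasMatching_inside hl (Set.subset_insert p _)
    ((h.hasMatching_insert_iff p (𝒢.D_subset hp) (notMem_A hp)).2 hp) i).anti (by simp)

end IsStable

end Decomposition

end GallaiEdmondsTheorem

section MaximumMatchings

variable {ι X : Type*} {ends : ι → Sym2 X} {Γ M : Finset ι} {V : Finset X} {T : Set X} {m : ℕ}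
  {𝒢 : Decomposition V}

namespace Decomposition

theorem card_filter_inside_le (hM : IsLooplessOn ends V M) (hMd : VertexDisjoint ends M)
    (i : Option (Quotient 𝒢.comp)) :
    (M.filter (Inside ends (𝒢.part i))).card ≤ (𝒢.part i).card / 2 := by
  have := (hMd.subset (Finset.filter_subset (Inside ends (𝒢.part i)) M)).two_mul_card_le
    (isLooplessOn_filter_inside hM _) (T := ∅) (by simp)
  rw [Finset.sdiff_empty] at this
  lia

theorem card_filter_touches_A_le (hMd : VertexDisjoint ends M) :
    (M.filter (Touches ends 𝒢.A)).card ≤ 𝒢.A.card :=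
  (hMd.subset (Finset.filter_subset _ M)).card_le_card _ fun _ he => (Finset.mem_filter.1 he).2

variable (𝒢) in
/-- A matching that attains the bound `𝒢.size` on its cardinality, part by part. -/
structure IsTight (ends : ι → Sym2 X) (M : Finset ι) : Prop where
  isLooplessOn : IsLooplessOn ends V M
  vertexDisjoint : VertexDisjoint ends M
  card_touches : (M.filter (Touches ends 𝒢.A)).card = 𝒢.A.card
  card_inside : ∀ i ∈ 𝒢.components.insertNone,
    (M.filter (Inside ends (𝒢.part i))).card = (𝒢.part i).card / 2

theorem isTight (hM : IsLooplessOn ends V M) (hg : ∀ e ∈ M, 𝒢.IsGood ends e)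
    (hMd : VertexDisjoint ends M) (hcard : M.card = 𝒢.size) : 𝒢.IsTight ends M := by
  rw [card_eq_sum hg, size] at hcard
  have hA := card_filter_touches_A_le (𝒢 := 𝒢) hMd
  have hle (i) (_ : i ∈ 𝒢.components.insertNone) := card_filter_inside_le (𝒢 := 𝒢) hM hMd i
  have hsum := Finset.sum_le_sum hle
  exact ⟨hM, hMd, by lia, (Finset.sum_eq_sum_iff_of_le hle).1 (by lia)⟩

namespace IsTight

theorem two_mul_card_add (h : 𝒢.IsTight ends M) {i : Option (Quotient 𝒢.comp)}
    (hi : i ∈ 𝒢.components.insertNone) :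
    2 * ((𝒢.part i).card / 2) +
      (𝒢.part i \ covered ends (M.filter (Inside ends (𝒢.part i)))).card = (𝒢.part i).card := by
  rw [← h.card_inside i hi]
  exact (h.vertexDisjoint.subset (Finset.filter_subset _ _)).two_mul_card_add_card_sdiff
    (isLooplessOn_filter_inside h.isLooplessOn _)

theorem notMem_covered_filter_inside (h : 𝒢.IsTight ends M) {e : ι} (he : e ∈ M)
    (hA : Touches ends 𝒢.A e) {v : X} (hv : v ∈ ends e) (i : Option (Quotient 𝒢.comp)) :
    v ∉ covered ends (M.filter (Inside ends (𝒢.part i))) := fun hvi => by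
  obtain ⟨f, hf, hvf⟩ := mem_covered.1 hvi
  obtain ⟨hf, hi⟩ := Finset.mem_filter.1 hf
  obtain rfl := h.vertexDisjoint he hf hv hvf
  obtain ⟨a, ha, hae⟩ := hA
  exact (mem_part.1 (hi a hae)).2.1 ha

theorem eq_of_rel (h : 𝒢.IsTight ends M) {x y : X} (hxy : 𝒢.comp x y)
    (hx : ∀ i, x ∉ covered ends (M.filter (Inside ends (𝒢.part i))))
    (hy : ∀ i, y ∉ covered ends (M.filter (Inside ends (𝒢.part i)))) : x = y := by
  refine (𝒢.eq_or_mem hxy).elim id fun ⟨hxD, hyD⟩ => ?_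
  have hadd := h.two_mul_card_add
    (Finset.some_mem_insertNone.2 (Finset.mem_image_of_mem (Quotient.mk 𝒢.comp) hxD))
  refine Finset.card_le_one.1 ?_ x (Finset.mem_sdiff.2 ⟨mem_part_some.2 ⟨hxD, rfl⟩, hx _⟩) y
    (Finset.mem_sdiff.2 ⟨mem_part_some.2 ⟨hyD, (mk_eq_mk.2 hxy).symm⟩, hy (some ⟦x⟧)⟩)
  lia

theorem touches_D (h : 𝒢.IsTight ends M) (heven : Even (𝒢.part none).card) {e : ι} (he : e ∈ M)
    (hA : Touches ends 𝒢.A e) : Touches ends 𝒢.D e := by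
  obtain ⟨a, ha, hae⟩ := hA
  obtain ⟨y, hay⟩ := Sym2.mem_iff_exists.1 hae
  have hye : y ∈ ends e := by simp [hay]
  have hne : a ≠ y := fun h' => (h.isLooplessOn e he).1 (by simp [hay, h'])
  refine ⟨y, by_contra fun hyD => ?_, hye⟩
  by_cases hyA : y ∈ 𝒢.A
  · have hle := (h.vertexDisjoint.subset (Finset.filter_subset (Touches ends 𝒢.A) M)).card_le_card
      (𝒢.A.erase y) fun f hf => by
        obtain ⟨hf, b, hb, hbf⟩ := Finset.mem_filter.1 hf
        rcases eq_or_ne b y with rfl | hby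
        · exact ⟨a, Finset.mem_erase.2 ⟨hne, ha⟩, h.vertexDisjoint he hf hye hbf ▸ hae⟩
        · exact ⟨b, Finset.mem_erase.2 ⟨hby, hb⟩, hbf⟩
    have := Finset.card_erase_add_one hyA
    have := h.card_touches
    lia
  · have hadd := h.two_mul_card_add Finset.none_mem_insertNone
    rw [Nat.two_mul_div_two_of_even heven, Nat.add_eq_left, Finset.card_eq_zero,
      Finset.sdiff_eq_empty_iff_subset] at hadd
    exact h.notMem_covered_filter_inside he ⟨a, ha, hae⟩ hye none
      (hadd (mem_part_none.2 ⟨(h.isLooplessOn e he).2 y hye, hyA, hyD⟩))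

theorem vertexDisjoint_contract (h : 𝒢.IsTight ends M) :
    VertexDisjoint (𝒢.contract ends) (M.filter (Touches ends 𝒢.A)) := by
  intro e he f hf q hqe hqf
  obtain ⟨he, heA⟩ := Finset.mem_filter.1 he
  obtain ⟨hf, hfA⟩ := Finset.mem_filter.1 hf
  obtain ⟨u, hu, rfl⟩ := Sym2.mem_map.1 hqe
  obtain ⟨w, hw, hwu⟩ := Sym2.mem_map.1 hqf
  obtain rfl := h.eq_of_rel (mk_eq_mk.1 hwu) (h.notMem_covered_filter_inside hf hfA hw)
    (h.notMem_covered_filter_inside he heA hu)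
  exact h.vertexDisjoint he hf hu hw

end IsTight

theorem hasMatching_contract (hl : IsLooplessOn ends V Γ) (hg : ∀ e ∈ Γ, 𝒢.IsGood ends e)
    (heven : Even (𝒢.part none).card) (h : HasMatching ends Γ 𝒢.size T) :
    HasMatching (𝒢.contract ends)
      (Γ.filter fun e => Touches ends 𝒢.A e ∧ Touches ends 𝒢.D e) 𝒢.A.card
      (Quotient.mk 𝒢.comp '' T) := by
  obtain ⟨M, hM, hMd, hcard, hMT⟩ := h
  have ht := isTight (hl.subset hM) (fun e he => hg e (hM he)) hMd hcard
  refine ⟨M.filter (Touches ends 𝒢.A), fun e he => ?_, ht.vertexDisjoint_contract,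
    ht.card_touches, ?_⟩
  · obtain ⟨he, hA⟩ := Finset.mem_filter.1 he
    exact Finset.mem_filter.2 ⟨hM he, hA, ht.touches_D heven he hA⟩
  · rintro e he q hq ⟨x, hx, rfl⟩
    obtain ⟨he, hA⟩ := Finset.mem_filter.1 he
    obtain ⟨u, hu, hux⟩ := Sym2.mem_map.1 hq
    have hxM (i) : x ∉ covered ends (M.filter (Inside ends (𝒢.part i))) := fun h => by
      obtain ⟨f, hf, hxf⟩ := mem_covered.1 h
      exact hMT f (Finset.mem_filter.1 hf).1 x hxf hx
    obtain rfl := ht.eq_of_rel (mk_eq_mk.1 hux) (ht.notMem_covered_filter_inside he hA hu) hxM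
    exact hMT e he u hu hx

theorem mem_sets_of_gallaiEdmonds_eq (hl : IsLooplessOn ends V Γ) (hΓ : Γ ∈ levelSets ends m)
    (h𝒢 : gallaiEdmonds ends V m Γ = 𝒢.invariants) :
    𝒢.IsBalanced ∧ 𝒢.size = m ∧ Γ ∈ 𝒢.sets ends := by
  obtain ⟨r, rfl, hr⟩ := exists_isStable hl hΓ h𝒢
  have hb := hr.isBalanced hl
  have hsize := hr.card_A_add_eq_size hl
  have hD := (Prod.ext_iff.1 h𝒢).1
  rw [hsize] at hΓ hD
  refine ⟨hb, hsize.symm, hr.isGood, fun i _ => hr.filter_inside_mem_avoidingSets hl i, ?_, ?_⟩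
  · simpa using hasMatching_contract hl hr.isGood hb.even hΓ.1
  · rintro _ ⟨p, hp, rfl⟩
    simpa using hasMatching_contract hl hr.isGood hb.even (hD.ge hp).2

theorem mem_sets_iff (hl : IsLooplessOn ends V Γ) (hb : 𝒢.IsBalanced) :
    Γ ∈ 𝒢.sets ends ↔
      Γ ∈ levelSets ends 𝒢.size ∧ gallaiEdmonds ends V 𝒢.size Γ = 𝒢.invariants :=
  ⟨levelSets_and_gallaiEdmonds_eq hl hb, fun ⟨hΓ, h𝒢⟩ =>
    (mem_sets_of_gallaiEdmonds_eq hl hΓ h𝒢).2.2⟩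

end Decomposition

end MaximumMatchings

section GeneralBound

variable {ι X : Type*} {ends : ι → Sym2 X} {E H : Finset ι} {V : Finset X} {m n t : ℕ}
  {𝒢 : Decomposition V}

/-- The bound for edge sets of matching number `m` that contain at most one prescribed edge. -/
def GeneralBound (ends : ι → Sym2 X) (m : ℕ) : Prop :=
  ∀ ⦃V : Finset X⦄ ⦃E H⦄, IsLooplessOn ends V E → H.card ≤ 1 →
    AcyclicAbove E (Set.Icc H E ∩ levelSets ends m) (3 * m)

/-- The bound for factor-critical edge sets on `2 * m + 1` vertices that contain at most one
prescribed edge. -/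
def CriticalBound (ends : ι → Sym2 X) (m : ℕ) : Prop :=
  ∀ ⦃V : Finset X⦄ ⦃E H⦄, IsLooplessOn ends V E → H.card ≤ 1 → V.card = 2 * m + 1 →
    AcyclicAbove E (Set.Icc H E ∩ avoidingSets ends V m) (3 * m)

theorem IsLooplessOn.eq_empty (h : IsLooplessOn ends V E) (hV : V.card ≤ 1) : E = ∅ := by
  refine Finset.eq_empty_of_forall_notMem fun e he => ?_
  obtain ⟨hd, hi⟩ := h e he
  have := Finset.card_le_card fun v hv => hi v (Sym2.mem_toFinset.1 hv)
  rw [Sym2.card_toFinset_of_not_isDiag _ hd] at this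
  lia

/-- The truncated subtraction is intended: for `n = 0` there are no edges. -/
theorem acyclicAbove_Icc_inter_matchSets_of_card (hl : IsLooplessOn ends V E) (hH : H.card ≤ 1)
    (hV : V.card = 2 * n) (hGB : ∀ j < n, GeneralBound ends j) :
    AcyclicAbove E (Set.Icc H E ∩ matchSets ends n ∅) (3 * n - 2) := by
  cases n with
  | zero =>
    have hE := hl.eq_empty (by lia)
    exact .of_subset_singleton_empty (fun s hs => Finset.subset_empty.1 (hE ▸ hs.1.2)) _
  | succ n =>
    exact acyclicAbove_Icc_inter_matchSets hH fun j hj => hGB j (by lia) hl hH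

namespace Decomposition

theorem isBipartite_contract
    (hE : ∀ e ∈ E, Touches ends 𝒢.A e ∧ Touches ends 𝒢.D e) :
    IsBipartite (𝒢.contract ends) (Quotient.mk 𝒢.comp '' 𝒢.D) E := by
  intro e he
  obtain ⟨⟨a, ha, hae⟩, d, hd, hde⟩ := hE e he
  have had : a ≠ d := fun h => notMem_A hd (h ▸ ha)
  refine ⟨Quotient.mk 𝒢.comp a, Quotient.mk 𝒢.comp d, ?_, ?_, d, hd, rfl⟩
  · rw [contract, (Sym2.mem_and_mem_iff had).1 ⟨hae, hde⟩, Sym2.map_mk]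
  · rintro ⟨x, hx, hxa⟩
    rcases 𝒢.eq_or_mem (mk_eq_mk.1 hxa) with rfl | ⟨-, haD⟩
    exacts [notMem_A hx ha, notMem_A haD ha]

theorem card_image_mk_A : (𝒢.A.image (Quotient.mk 𝒢.comp)).card = 𝒢.A.card :=
  Finset.card_image_of_injOn fun _ ha _ _ hab =>
    (𝒢.eq_or_mem (mk_eq_mk.1 hab)).resolve_right fun h => notMem_A h.1 ha

theorem acyclicAbove_touches_A (hE : ∀ e ∈ E, Touches ends 𝒢.A e) (hH : H.card ≤ 1) :
    AcyclicAbove E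
      (Set.Icc H E ∩ {Γ | Γ.filter (Touches ends 𝒢.D) ∈
        avoidingSets (𝒢.contract ends) (Quotient.mk 𝒢.comp '' 𝒢.D) 𝒢.A.card})
      (2 * 𝒢.A.card + (H.filter (¬ Touches ends 𝒢.D ·)).card) := by
  have hsurplus := (bipartiteBound_and_surplusBound (𝒢.contract ends) 𝒢.A.card).2
    (E := E.filter (Touches ends 𝒢.D)) (H := H.filter (Touches ends 𝒢.D))
    (J := 𝒢.A.image (Quotient.mk 𝒢.comp))
    (isBipartite_contract fun e he => ⟨hE e (Finset.mem_filter.1 he).1, (Finset.mem_filter.1 he).2⟩)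
    ((Finset.card_filter_le _ _).trans hH)
    (fun e he =>
      let ⟨a, ha, hae⟩ := hE e (Finset.mem_filter.1 he).1
      ⟨_, Finset.mem_image_of_mem _ ha, mk_mem_contract hae⟩)
    card_image_mk_A
  have hfree := AcyclicAbove.Icc (E.filter (¬ Touches ends 𝒢.D ·))
    (H.filter (¬ Touches ends 𝒢.D ·))
  convert hsurplus.prod_filter (U₂ := Set.univ) (by simpa using hfree) using 1
  ext s
  simp

theorem acyclicAbove_inside (hl : IsLooplessOn ends V E) (hH : H.card ≤ 1)
    (hg : ∀ e ∈ E, 𝒢.IsGood ends e) (hA : ∀ e ∈ E, ¬ Touches ends 𝒢.A e) (hb : 𝒢.IsBalanced)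
    (hGB : ∀ j < (𝒢.part none).card / 2, GeneralBound ends j)
    (hCB : ∀ q ∈ 𝒢.components, CriticalBound ends ((𝒢.part (some q)).card / 2)) :
    AcyclicAbove E
      (Set.Icc H E ∩ {Γ | ∀ i ∈ 𝒢.components.insertNone, Γ.filter (𝒢.edgeLabel ends · = i) ∈
        avoidingSets ends (𝒢.part i ∩ 𝒢.D) ((𝒢.part i).card / 2)})
      (3 * ((𝒢.part none).card / 2) - 2 +
        3 * ∑ q ∈ 𝒢.components, (𝒢.part (some q)).card / 2) := by
  have hpart (i) : IsLooplessOn ends (𝒢.part i) (E.filter (𝒢.edgeLabel ends · = i)) :=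
    fun e he => by
      obtain ⟨he, hi⟩ := Finset.mem_filter.1 he
      exact ⟨(hl e he).1, (hg e he).inside_iff.2 ⟨hA e he, hi⟩⟩
  have hcard (i) : (H.filter (𝒢.edgeLabel ends · = i)).card ≤ 1 :=
    (Finset.card_filter_le _ _).trans hH
  have hnone : avoidingSets ends (𝒢.part none ∩ 𝒢.D) ((𝒢.part none).card / 2) =
      matchSets ends ((𝒢.part none).card / 2) ∅ := by
    have hD : (𝒢.part none : Set X) ∩ 𝒢.D = ∅ :=
      Set.eq_empty_of_forall_notMem fun x hx => (mem_part_none.1 hx.1).2.2 hx.2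
    ext s
    simp [hD, avoidingSets, mem_matchSets]
  have hsome (q) : (𝒢.part (some q) : Set X) ∩ 𝒢.D = 𝒢.part (some q) :=
    Set.inter_eq_left.2 fun x hx => (mem_part_some.1 hx).1
  have hpi := AcyclicAbove.pi (𝒢.edgeLabel ends) 𝒢.components.insertNone (E := E) (H := H)
    (fun e he => (hg e he).edgeLabel_mem (hA e he))
    (U := fun i => avoidingSets ends (𝒢.part i ∩ 𝒢.D) ((𝒢.part i).card / 2))
    (t := fun i => 3 * ((𝒢.part i).card / 2) - if i = none then 2 else 0)
    (Finset.forall_mem_insertNone.2 ⟨?_, fun q hq => ?_⟩)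
  · have hsum : ∑ i ∈ 𝒢.components.insertNone,
        (3 * ((𝒢.part i).card / 2) - if i = none then 2 else 0) =
        3 * ((𝒢.part none).card / 2) - 2 +
          3 * ∑ q ∈ 𝒢.components, (𝒢.part (some q)).card / 2 := by
      simp [Finset.sum_insertNone, Finset.mul_sum]
    rw [hsum] at hpi
    convert hpi
  · rw [hnone, if_pos rfl]
    convert acyclicAbove_Icc_inter_matchSets_of_card (hpart none) (hcard none)
      (Nat.two_mul_div_two_of_even hb.even).symm hGB
  · rw [hsome, if_neg (Option.some_ne_none q), Nat.sub_zero]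
    convert hCB q hq (hpart (some q)) (hcard (some q))
      (Nat.two_mul_div_two_add_one_of_odd (hb.odd q hq)).symm

theorem mem_sets_iff_filter {Γ : Finset ι} :
    Γ ∈ 𝒢.sets ends ↔ (∀ e ∈ Γ, 𝒢.IsGood ends e) ∧
      (Γ.filter (Touches ends 𝒢.A)).filter (Touches ends 𝒢.D) ∈
        avoidingSets (𝒢.contract ends) (Quotient.mk 𝒢.comp '' 𝒢.D) 𝒢.A.card ∧
      ∀ i ∈ 𝒢.components.insertNone,
        (Γ.filter (¬ Touches ends 𝒢.A ·)).filter (𝒢.edgeLabel ends · = i) ∈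
          avoidingSets ends (𝒢.part i ∩ 𝒢.D) ((𝒢.part i).card / 2) := by
  refine and_congr_right fun hg => ?_
  have hinside (i) : (Γ.filter (¬ Touches ends 𝒢.A ·)).filter (𝒢.edgeLabel ends · = i) =
      Γ.filter (Inside ends (𝒢.part i)) := by
    rw [Finset.filter_filter]
    exact Finset.filter_congr fun e he => (hg e he).inside_iff.symm
  simp only [hinside, Finset.filter_filter]
  exact and_comm

theorem two_mul_card_A_add_le (hl : IsLooplessOn ends V H) (hH : H.card ≤ 1)
    (heven : Even (𝒢.part none).card) :
    2 * 𝒢.A.card + ((H.filter (Touches ends 𝒢.A)).filter (¬ Touches ends 𝒢.D ·)).card +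
      (3 * ((𝒢.part none).card / 2) - 2) + min 1 (𝒢.A.card + (𝒢.part none).card / 2) ≤
        3 * (𝒢.A.card + (𝒢.part none).card / 2) := by
  have hle : ((H.filter (Touches ends 𝒢.A)).filter (¬ Touches ends 𝒢.D ·)).card ≤ 1 :=
    (Finset.card_filter_le _ _).trans ((Finset.card_filter_le _ _).trans hH)
  have hzero (hA : 𝒢.A.card ≤ 1) (hnone : (𝒢.part none).card / 2 = 0) :
      ((H.filter (Touches ends 𝒢.A)).filter (¬ Touches ends 𝒢.D ·)).card = 0 := by
    have hcard := Nat.two_mul_div_two_of_even heven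
    rw [hnone, mul_zero, eq_comm, Finset.card_eq_zero] at hcard
    refine Finset.card_eq_zero.2 (Finset.filter_eq_empty_iff.2 fun e he => not_not.2 ?_)
    obtain ⟨he, a, ha, hae⟩ := Finset.mem_filter.1 he
    obtain ⟨y, hay⟩ := Sym2.mem_iff_exists.1 hae
    have hye : y ∈ ends e := by simp [hay]
    refine ⟨y, by_contra fun hyD => ?_, hye⟩
    have hyA : y ∈ 𝒢.A := by_contra fun hyA => by
      simpa [hcard] using mem_part_none.2 ⟨(hl e he).2 y hye, hyA, hyD⟩
    exact (hl e he).1 (by simp [hay, Finset.card_le_one.1 hA a ha y hyA])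
  lia

theorem acyclicAbove_sets (hl : IsLooplessOn ends V E) (hHE : H ⊆ E) (hH : H.card ≤ 1)
    (hb : 𝒢.IsBalanced) (hGB : ∀ j < 𝒢.size, GeneralBound ends j)
    (hCB : ∀ q ∈ 𝒢.components, CriticalBound ends ((𝒢.part (some q)).card / 2)) :
    AcyclicAbove E (Set.Icc H E ∩ 𝒢.sets ends)
      (3 * 𝒢.size - min 1 (𝒢.A.card + (𝒢.part none).card / 2)) := by
  have hcard {p : ι → Prop} [DecidablePred p] : (H.filter p).card ≤ 1 :=
    (Finset.card_filter_le _ _).trans hH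
  have hsize : 𝒢.size = 𝒢.A.card + ((𝒢.part none).card / 2 +
      ∑ q ∈ 𝒢.components, (𝒢.part (some q)).card / 2) := by
    rw [size, Finset.sum_insertNone]
  set E' := E.filter (𝒢.IsGood ends)
  have hE' : E' ⊆ E := Finset.filter_subset _ _
  have hprod := AcyclicAbove.prod_filter (E := E') (H := H)
    (acyclicAbove_touches_A (fun e he => (Finset.mem_filter.1 he).2) hcard)
    (acyclicAbove_inside (hl.subset ((Finset.filter_subset _ _).trans hE')) hcard
      (fun e he => (Finset.mem_filter.1 (Finset.mem_filter.1 he).1).2)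
      (fun e he => (Finset.mem_filter.1 he).2) hb (fun j hj => hGB j (by lia)) hCB)
  have hle := two_mul_card_A_add_le (hl.subset hHE) hH hb.even
  convert (hprod.mono_ground hE').mono
    (t' := 3 * 𝒢.size - min 1 (𝒢.A.card + (𝒢.part none).card / 2)) (by lia) using 1
  ext s
  have hs : s ⊆ E' ↔ s ⊆ E ∧ ∀ e ∈ s, 𝒢.IsGood ends e := by
    simp only [E', Finset.subset_iff, Finset.mem_filter, forall_and]
  simp only [Set.mem_inter_iff, Set.mem_Icc, Set.mem_ofPred_eq, mem_sets_iff_filter]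
  change (H ⊆ s ∧ s ⊆ E) ∧ _ ↔ (H ⊆ s ∧ s ⊆ E') ∧ _
  rw [hs]
  tauto

theorem IsBalanced.card_A_add_pos (hb : 𝒢.IsBalanced) (hV : ¬ V ⊆ 𝒢.D) :
    0 < 𝒢.A.card + (𝒢.part none).card / 2 := by
  obtain ⟨v, hv, hvD⟩ := Finset.not_subset.1 hV
  have := Nat.two_mul_div_two_of_even hb.even
  by_cases hvA : v ∈ 𝒢.A
  · have := Finset.card_pos.2 ⟨v, hvA⟩
    lia
  · have := Finset.card_pos.2 ⟨v, mem_part_none.2 ⟨hv, hvA, hvD⟩⟩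
    lia

theorem add_card_part_le_size {q : Quotient 𝒢.comp} (hq : q ∈ 𝒢.components) :
    𝒢.A.card + (𝒢.part none).card / 2 + (𝒢.part (some q)).card / 2 ≤ 𝒢.size := by
  have := Finset.single_le_sum_of_canonicallyOrdered
    (f := fun q => (𝒢.part (some q)).card / 2) hq
  rw [size, Finset.sum_insertNone]
  lia

end Decomposition

theorem acyclicAbove_of_decompositionSets (hl : IsLooplessOn ends V E) {U : Set (Finset ι)}
    (hU : U.OrdConnected) (Q : Set X → Prop)
    (hUQ : U = {Γ ∈ Set.Icc H E ∩ levelSets ends m | Q (missable ends V m Γ)})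
    (h : ∀ 𝒢 : Decomposition V, H ⊆ E → 𝒢.IsBalanced → 𝒢.size = m → Q 𝒢.D →
      AcyclicAbove E (Set.Icc H E ∩ 𝒢.sets ends) t) :
    AcyclicAbove E U t := by
  refine .of_fibers (monotone_gallaiEdmonds (ends := ends) (V := V) (n := m)) hU
    (fun s hs => (hUQ.le hs).1.1.2) fun p => ?_
  obtain hp | ⟨Γ₀, hΓ₀, rfl⟩ := Set.eq_empty_or_nonempty (U ∩ gallaiEdmonds ends V m ⁻¹' {p})
  · exact hp ▸ .empty t
  obtain ⟨⟨hI₀, hm₀⟩, hQ⟩ := hUQ.le hΓ₀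
  obtain ⟨𝒢, h𝒢⟩ := Decomposition.exists_gallaiEdmonds_eq (m := m) (hl.subset hI₀.2)
  obtain ⟨hb, rfl, -⟩ := Decomposition.mem_sets_of_gallaiEdmonds_eq (hl.subset hI₀.2) hm₀ h𝒢
  have hD {Γ : Finset ι} (hΓ : gallaiEdmonds ends V 𝒢.size Γ = 𝒢.invariants) :
      missable ends V 𝒢.size Γ = 𝒢.D := (Prod.ext_iff.1 hΓ).1
  convert h 𝒢 (hI₀.1.trans hI₀.2) hb rfl (hD h𝒢 ▸ hQ) using 1
  ext Γ
  rw [h𝒢, hUQ]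
  constructor
  · rintro ⟨⟨⟨hI, hΓm⟩, -⟩, hΓ⟩
    exact ⟨hI, (Decomposition.mem_sets_iff (hl.subset hI.2) hb).2 ⟨hΓm, hΓ⟩⟩
  · rintro ⟨hI, hΓ⟩
    obtain ⟨hΓm, hΓ⟩ := (Decomposition.mem_sets_iff (hl.subset hI.2) hb).1 hΓ
    exact ⟨⟨⟨hI, hΓm⟩, by rwa [hD hΓ, ← hD h𝒢]⟩, hΓ⟩

theorem generalBound_of_criticalBound (hGB : ∀ j < m, GeneralBound ends j)
    (hCB : ∀ j ≤ m, CriticalBound ends j) : GeneralBound ends m := by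
  intro V E H hl hH
  refine acyclicAbove_of_decompositionSets (H := H) (m := m) hl
    (Set.ordConnected_Icc.inter ordConnected_levelSets) (fun _ => True)
    (by simp only [and_true, Set.ofPred_mem_eq]) ?_
  rintro 𝒢 hHE hb rfl -
  refine (Decomposition.acyclicAbove_sets hl hHE hH hb hGB fun q hq => hCB _ ?_).mono
    (Nat.sub_le _ _)
  have := Decomposition.add_card_part_le_size hq
  lia

theorem IsLooplessOn.acyclicAbove_levelSets_of_not_subset (hl : IsLooplessOn ends V E)
    (hH : H.card ≤ 1) (hGB : ∀ j ≤ n, GeneralBound ends j) (hCB : ∀ j ≤ n, CriticalBound ends j)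
    {U : Set (Finset ι)} (hU : U.OrdConnected)
    (hUQ : U = {Γ ∈ Set.Icc H E ∩ levelSets ends (n + 1) |
      ¬ ↑V ⊆ missable ends V (n + 1) Γ}) :
    AcyclicAbove E U (3 * n + 2) := by
  refine acyclicAbove_of_decompositionSets hl hU (fun D => ¬ ↑V ⊆ D) hUQ
    fun 𝒢 hHE hb hsize hV => ?_
  have hpos := hb.card_A_add_pos (Finset.coe_subset.not.1 hV)
  refine (Decomposition.acyclicAbove_sets hl hHE hH hb (fun j hj => hGB j (by lia))
    fun q hq => hCB _ ?_).mono (by lia)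
  have := Decomposition.add_card_part_le_size hq
  lia

theorem criticalBound_zero : CriticalBound ends 0 := by
  intro V E H hl _ hV
  have hE := hl.eq_empty (by lia)
  exact .of_subset_singleton_empty (fun s hs => Finset.subset_empty.1 (hE ▸ hs.1.2)) _

theorem criticalBound_succ (hGB : ∀ j ≤ n, GeneralBound ends j)
    (hCB : ∀ j ≤ n, CriticalBound ends j) : CriticalBound ends (n + 1) := by
  intro V E H hl hH hV
  have hge : AcyclicAbove E (Set.Icc H E ∩ matchSets ends (n + 1) ∅) (3 * n + 1) :=
    acyclicAbove_Icc_inter_matchSets hH fun j hj => hGB j hj hl hH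
  have hmax {Γ : Finset ι} (hΓ : Γ ∈ Set.Icc H E) : ¬ HasMatching ends Γ (n + 2) ∅ := by
    rintro ⟨M, hM, hMd, hMc, -⟩
    have := hMd.two_mul_card_add_card_sdiff (hl.subset (hM.trans hΓ.2))
    lia
  have hquot := AcyclicAbove.quot hge.ordConnected isUpperSet_avoidingSets
    (hge.mono (by lia : 3 * n + 1 ≤ 3 * n + 2 + 1)) <|
    hl.acyclicAbove_levelSets_of_not_subset hH hGB hCB
      (hge.ordConnected.inter isUpperSet_avoidingSets.compl.ordConnected)
      (U := (Set.Icc H E ∩ matchSets ends (n + 1) ∅) \ avoidingSets ends V (n + 1)) <| by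
        ext Γ
        have hV_iff : ↑V ⊆ missable ends V (n + 1) Γ ↔
            ∀ v ∈ (V : Set X), HasMatching ends Γ (n + 1) {v} :=
          forall₂_congr fun v hv => and_iff_right hv
        simp only [Set.mem_sdiff, Set.mem_inter_iff, Set.mem_ofPred_eq, mem_levelSets, hV_iff]
        constructor
        · rintro ⟨⟨hΓ, h₀⟩, hn⟩
          exact ⟨⟨hΓ, h₀, hmax hΓ⟩, fun h => hn ⟨h₀, h⟩⟩
        · rintro ⟨⟨hΓ, h₀, -⟩, hn⟩
          exact ⟨⟨hΓ, h₀⟩, fun h => hn h.2⟩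
  rw [mul_add_one]
  convert hquot using 1
  ext Γ
  exact ⟨fun ⟨hΓ, h⟩ => ⟨⟨hΓ, h.1⟩, h⟩, fun ⟨⟨hΓ, _⟩, h⟩ => ⟨hΓ, h⟩⟩

theorem generalBound_and_criticalBound (ends : ι → Sym2 X) (m : ℕ) :
    GeneralBound ends m ∧ CriticalBound ends m := by
  induction m using Nat.strong_induction_on with
  | _ m ih =>
    have hCB : CriticalBound ends m := by
      cases m with
      | zero => exact criticalBound_zero
      | succ n =>
        exact criticalBound_succ (fun j hj => (ih j (by lia)).1) fun j hj => (ih j (by lia)).2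
    refine ⟨generalBound_of_criticalBound (fun j hj => (ih j hj).1) fun j hj => ?_, hCB⟩
    rcases hj.lt_or_eq with hj | rfl
    exacts [(ih j hj).2, hCB]

end GeneralBound

/-! ## Links in the complex `NM` -/

section NonMatching

variable {V : Type} {E H : Finset (Sym2 V)} {k n c : ℕ}

theorem nu_lt_iff (hE : ∀ e ∈ E, ¬ e.IsDiag) (hk : 0 < k) : nu E < k ↔ ¬ HasMatching id E k ∅ := by
  rw [nu, Finset.sup_lt_iff hk]
  constructor
  · rintro h ⟨M, hM, hMd, rfl, -⟩
    have hmatching : IsMatching M :=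
      ⟨fun e he => hE e (hM he), fun e he f hf hef v hve hvf => hef (hMd he hf hve hvf)⟩
    exact (h M (Finset.mem_filter.2 ⟨Finset.mem_powerset.2 hM, hmatching⟩)).false
  · intro h M hM
    obtain ⟨hM, -, hMd⟩ := Finset.mem_filter.1 hM
    by_contra! hk
    have hmatching : HasMatching id E M.card ∅ := ⟨M, Finset.mem_powerset.1 hM,
      fun e he f hf v hve hvf => by_contra fun hef => hMd e he f hf hef v hve hvf, rfl, by simp⟩
    exact h (hmatching.of_le hk)

theorem mem_NM {s : Finset (Sym2 V)} : s ∈ NM k E ↔ s ⊆ E ∧ nu s < k := by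
  rw [NM, Finset.mem_filter, Finset.mem_powerset]

theorem isLowerSet_NM : IsLowerSet (NM k E : Set (Finset (Sym2 V))) := by
  intro s s' hs' hs
  obtain ⟨hsE, hsk⟩ := mem_NM.1 hs
  refine mem_NM.2 ⟨hs'.trans hsE, lt_of_le_of_lt (Finset.sup_mono ?_) hsk⟩
  exact Finset.filter_subset_filter _ (Finset.powerset_mono.2 hs')

theorem Ici_inter_NM (hE : ∀ e ∈ E, ¬ e.IsDiag) :
    Set.Ici H ∩ NM (n + 1) E = Set.Icc H E \ matchSets id (n + 1) ∅ := by
  ext s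
  constructor
  · rintro ⟨hHs, hs⟩
    obtain ⟨hsE, hsn⟩ := mem_NM.1 hs
    exact ⟨⟨hHs, hsE⟩, (nu_lt_iff (fun e he => hE e (hsE he)) n.succ_pos).1 hsn⟩
  · rintro ⟨⟨hHs, hsE⟩, hsn⟩
    exact ⟨hHs, mem_NM.2 ⟨hsE, (nu_lt_iff (fun e he => hE e (hsE he)) n.succ_pos).2 hsn⟩⟩

theorem acyclicAbove_Ici_inter_NM (hE : ∀ e ∈ E, ¬ e.IsDiag) (hH : H.Nonempty)
    (h : ∀ E' ⊆ E, ∀ e, ∀ j ≤ n, AcyclicAbove E' (Set.Icc {e} E' ∩ levelSets id j) (c * j)) :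
    AcyclicAbove E (Set.Ici H ∩ NM (n + 1) E) (c * n + (H.card - 1)) := by
  obtain ⟨e, he⟩ := hH
  have hIcc := AcyclicAbove.Icc_union (H.erase e) fun E' hE' => Set.sdiff_eq .. ▸
    acyclicAbove_Icc_sdiff_matchSets (h E' hE' e)
  rw [Ici_inter_NM hE, Set.sdiff_eq]
  convert hIcc
  · ext f
    by_cases hf : f = e <;> simp [hf, he]
  · rw [Finset.card_erase_of_mem he]

theorem vanishesAt_linkOf_NM [LinearOrder (Sym2 V)] {F : Type} [Field F] {d : ℕ}
    (hE : ∀ e ∈ E, ¬ e.IsDiag) (hH : H.Nonempty)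
    (h : ∀ E' ⊆ E, ∀ e, ∀ j ≤ n, AcyclicAbove E' (Set.Icc {e} E' ∩ levelSets id j) (c * j))
    (hd : c * n - 1 ≤ d) : VanishesAt F (linkOf (NM (n + 1) E) H) d := by
  have := hH.card_pos
  refine ((acyclicAbove_Ici_inter_NM hE hH h).mono ?_).vanishesAt_linkOf F isLowerSet_NM
    (fun s hs => (mem_NM.1 hs).1) hd
  lia

end NonMatching

/-- For `k ≥ 2` and a non-empty face `H` of `NM_k(E)`, the link of `H` in `NM_k(E)` has
vanishing reduced homology in all dimensions `d ≥ 3k - 4`; if moreover the graph is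
bipartite, in all dimensions `d ≥ 2k - 3`. -/
theorem NM_link_vanishing {V : Type} [LinearOrder (Sym2 V)] (F : Type) [Field F]
    (k : ℕ) (hk : 2 ≤ k) (E : Finset (Sym2 V)) (hs : ∀ e ∈ E, ¬ e.IsDiag)
    (H : Finset (Sym2 V)) (hH : H ∈ NM k E) (hHne : H ≠ ∅) :
    (∀ d, 3 * k - 4 ≤ d → VanishesAt F (linkOf (NM k E) H) d) ∧
    ((∃ side : V → Bool, ∀ e ∈ E, ∃ x y, e = s(x, y) ∧ side x ≠ side y) →
      ∀ d, 2 * k - 3 ≤ d → VanishesAt F (linkOf (NM k E) H) d) := by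
  obtain ⟨n, rfl⟩ : ∃ n, k = n + 1 := ⟨k - 1, by lia⟩
  have hne := Finset.nonempty_iff_ne_empty.2 hHne
  refine ⟨fun d hd => vanishesAt_linkOf_NM (c := 3) hs hne (fun E' hE' e j _ => ?_) (by lia),
    fun ⟨side, hside⟩ d hd => vanishesAt_linkOf_NM (c := 2) hs hne (fun E' hE' e j _ => ?_)
      (by lia)⟩
  · have hl : IsLooplessOn id (covered id E) E := fun e he =>
      ⟨hs e he, fun v hv => mem_covered.2 ⟨e, he, hv⟩⟩
    exact (generalBound_and_criticalBound id j).1 (hl.subset hE') (Finset.card_singleton e).le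
  · have hB : IsBipartite id {v | side v} E := fun e he => by
      obtain ⟨x, y, rfl, hxy⟩ := hside e he
      cases hx : side x
      · exact ⟨x, y, rfl, by simp [hx], by simpa [hx] using hxy⟩
      · exact ⟨y, x, Sym2.eq_swap, by simpa [hx] using hxy, hx⟩
    exact (bipartiteBound_and_surplusBound id j).1 (hB.subset hE') (Finset.card_singleton e).le
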